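/- arXiv:1108.3658 — 7 statements merged into one kernel-verified Lean document; each statement's English description precedes it below -/
import Mathlib

section
/- A quasigroup satisfying the Moufang identity $x(y(xz)) = ((xy)x)z$ has a two-sided neutral element, i.e., is a loop. -/
theorem moufang_quasigroup_is_loop_M3 (Q : Type*) (mul ld rd : Q → Q → Q)
    (hQ1 : ∀ x y, ld x (mul x y) = y) (hQ2 : ∀ x y, mul x (ld x y) = y)
    (hQ3 : ∀ x y, rd (mul x y) y = x) (hQ4 : ∀ x y, mul (rd x y) y = x)
    [Nonempty Q]
    (hid : ∀ x y z, mul x (mul y (mul x z)) = mul (mul (mul x y) x) z) :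
    ∃ e : Q, ∀ x, mul e x = x ∧ mul x e = x := by
  obtain ⟨J, hJ⟩ : ∃ J : Q → Q, ∀ x, J x = ld x (rd x x) := ⟨fun x => ld x (rd x x), fun _ => rfl⟩
  have key : (∀ a b : Q, mul a (J a) = mul b (J b)) ∧ (∀ x, mul (mul x (J x)) x = x) ∧
      (∀ x, J (J x) = x) ∧ (∀ x y, mul x (mul (J x) y) = y) := by
    have key0 : ∀ a b : Q, (mul a (J a) = mul b (J b)) ∧ (∀ x, mul (mul x (J x)) x = x) ∧
      (∀ x, J (J x) = x) ∧ (∀ x y, mul x (mul (J x) y) = y) := by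
      intro a b
      have E0 : ∀ x0 x1 : Q, (ld x0 (mul x0 x1)) = x1 := fun x0 x1 => (hQ1 x0 x1)
      have E1 : ∀ x0 x1 : Q, (mul x0 (ld x0 x1)) = x1 := fun x0 x1 => (hQ2 x0 x1)
      have E2 : ∀ x0 x1 : Q, (rd (mul x0 x1) x1) = x0 := fun x0 x1 => (hQ3 x0 x1)
      have E3 : ∀ x0 x1 : Q, (mul (rd x0 x1) x1) = x0 := fun x0 x1 => (hQ4 x0 x1)
      have E4 : ∀ x0 x1 x2 : Q, (mul x0 (mul x1 (mul x0 x2))) = (mul (mul (mul x0 x1) x0) x2) := fun x0 x1 x2 => (hid x0 x1 x2)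
      have E5 : ∀ x0 : Q, (J x0) = (ld x0 (rd x0 x0)) := fun x0 => (hJ x0)
      have E6 : ∀ x0 x1 : Q, (ld x0 (mul x0 x1)) = x1 := fun x0 x1 => (E0 x0 x1)
      have E7 : ∀ x0 x1 : Q, (mul x0 (ld x0 x1)) = x1 := fun x0 x1 => (E1 x0 x1)
      have E8 : ∀ x0 x1 : Q, (rd (mul x0 x1) x1) = x0 := fun x0 x1 => (E2 x0 x1)
      have E9 : ∀ x0 x1 : Q, (mul (rd x0 x1) x1) = x0 := fun x0 x1 => (E3 x0 x1)
      have E10 : ∀ x0 : Q, (ld x0 (rd x0 x0)) = (J x0) := fun x0 => (E5 x0).symm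
      have E11 : ∀ x0 x1 x2 : Q, (mul (mul (mul x0 x1) x0) x2) = (mul x0 (mul x1 (mul x0 x2))) := fun x0 x1 x2 => (E4 x0 x1 x2).symm
      have E14 : ∀ x0 : Q, (rd x0 x0) = (mul x0 (J x0)) := fun x0 => ((E7 x0 (rd x0 x0)).symm.trans
          (congrArg (fun w => (mul x0 w)) (E10 x0)))
      have E15 : ∀ x0 : Q, (mul (mul x0 (J x0)) x0) = x0 := fun x0 => ((congrArg (fun w => (mul w x0)) (E14 x0).symm).trans
          (E9 x0 x0))
      have E16 : ∀ x0 x1 x2 : Q, (ld (mul (mul x0 x1) x0) (mul x0 (mul x1 (mul x0 x2)))) = x2 := fun x0 x1 x2 => ((congrArg (fun w => (ld (mul (mul x0 x1) x0) w)) (E11 x0 x1 x2).symm).trans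
          (E6 (mul (mul x0 x1) x0) x2))
      have E18 : ∀ x0 x1 : Q, (mul (J x0) (mul x0 x1)) = x1 := fun x0 x1 => (((E6 x0 (mul (J x0) (mul x0 x1))).symm.trans
          (congrArg (fun w => (ld w (mul x0 (mul (J x0) (mul x0 x1))))) (E15 x0).symm)).trans
          (E16 x0 (J x0) x1))
      have E19 : ∀ x0 x1 : Q, (ld (J x0) x1) = (mul x0 x1) := fun x0 x1 => ((congrArg (fun w => (ld (J x0) w)) (E18 x0 x1).symm).trans
          (E6 (J x0) (mul x0 x1)))
      have E20 : ∀ x0 x1 : Q, (ld x0 x1) = (mul (J x0) x1) := fun x0 x1 => ((E18 x0 (ld x0 x1)).symm.trans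
          (congrArg (fun w => (mul (J x0) w)) (E7 x0 x1)))
      have E21 : ∀ x0 x1 : Q, (rd x0 (mul x1 x0)) = (J x1) := fun x0 x1 => ((congrArg (fun w => (rd w (mul x1 x0))) (E18 x1 x0).symm).trans
          (E8 (J x1) (mul x1 x0)))
      have E22 : ∀ x0 x1 x2 : Q, (mul x0 (mul x1 (mul x0 (mul (J (mul (mul x0 x1) x0)) x2)))) = x2 := fun x0 x1 x2 => (((congrArg (fun w => (mul x0 (mul x1 (mul x0 w)))) (E20 (mul (mul x0 x1) x0) x2).symm).trans
          (E11 x0 x1 (ld (mul (mul x0 x1) x0) x2)).symm).trans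
          (E7 (mul (mul x0 x1) x0) x2))
      have E23 : ∀ x0 : Q, (J (J x0)) = x0 := fun x0 => (((E21 (mul x0 x0) (J x0)).symm.trans
          (congrArg (fun w => (rd (mul x0 x0) w)) (E18 x0 x0))).trans
          (E8 x0 x0))
      have E26 : ∀ x0 x1 : Q, (mul x0 (mul (J x0) x1)) = x1 := fun x0 x1 => ((E19 x0 (mul (J x0) x1)).symm.trans
          (E6 (J x0) x1))
      have E27 : ∀ x0 x1 x2 : Q, (mul x0 (mul (mul (J x0) x1) (mul x0 x2))) = (mul (mul x1 x0) x2) := fun x0 x1 x2 => (((congrArg (fun w => (mul x0 (mul w (mul x0 x2)))) (E20 x0 x1).symm).trans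
          (E11 x0 (ld x0 x1) x2).symm).trans
          (congrArg (fun w => (mul (mul w x0) x2)) (E7 x0 x1)))
      have E28 : ∀ x0 x1 : Q, (J (rd x0 x1)) = (rd x1 x0) := fun x0 x1 => ((E21 x1 (rd x0 x1)).symm.trans
          (congrArg (fun w => (rd x1 w)) (E9 x0 x1)))
      have E29 : ∀ x0 : Q, (J (mul x0 (J x0))) = (mul x0 (J x0)) := fun x0 => (((E21 x0 (mul x0 (J x0))).symm.trans
          (congrArg (fun w => (rd x0 w)) (E15 x0))).trans
          (E14 x0))
      have E30 : ∀ x0 : Q, (mul (mul (J x0) x0) (J x0)) = (J x0) := fun x0 => ((congrArg (fun w => (mul (mul (J x0) w) (J x0))) (E23 x0).symm).trans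
          (E15 (J x0)))
      have E32 : ∀ x0 x1 x2 : Q, (rd (mul x0 (mul x1 (mul x0 x2))) x2) = (mul (mul x0 x1) x0) := fun x0 x1 x2 => ((congrArg (fun w => (rd w x2)) (E11 x0 x1 x2).symm).trans
          (E8 (mul (mul x0 x1) x0) x2))
      have E33 : ∀ x0 : Q, (J (mul (J x0) x0)) = (mul (J x0) x0) := fun x0 => (((congrArg (fun w => (J (mul (J x0) w))) (E23 x0).symm).trans
          (E29 (J x0))).trans
          (congrArg (fun w => (mul (J x0) w)) (E23 x0)))
      have E34 : ∀ x0 x1 x2 : Q, (mul (rd x0 x1) (mul (rd x1 x0) x2)) = x2 := fun x0 x1 x2 => ((congrArg (fun w => (mul w (mul (rd x1 x0) x2))) (E28 x1 x0).symm).trans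
          (E18 (rd x1 x0) x2))
      have E36 : ∀ x0 x1 : Q, (mul (mul x0 (J x0)) (mul (mul x0 (J x0)) x1)) = x1 := fun x0 x1 => ((congrArg (fun w => (mul w (mul (mul x0 (J x0)) x1))) (E29 x0).symm).trans
          (E18 (mul x0 (J x0)) x1))
      have E38 : ∀ x0 x1 x2 : Q, (mul (J (mul (mul x0 x1) x0)) (mul x0 (mul x1 x2))) = (mul (J x0) x2) := fun x0 x1 x2 => ((((E20 (mul (mul x0 x1) x0) (mul x0 (mul x1 x2))).symm.trans
          (congrArg (fun w => (ld (mul (mul x0 x1) x0) (mul x0 (mul x1 w)))) (E7 x0 x2).symm)).trans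
          (E16 x0 x1 (ld x0 x2))).trans
          (E20 x0 x2))
      have E39 : ∀ x0 x1 : Q, (mul (mul x0 (J (mul (mul x0 x1) x0))) x0) = (J x1) := fun x0 x1 => ((((E32 x0 (J (mul (mul x0 x1) x0)) (mul x1 x0)).symm.trans
          (congrArg (fun w => (rd (mul x0 w) (mul x1 x0))) (E38 x0 x1 x0))).trans
          (congrArg (fun w => (rd w (mul x1 x0))) (E26 x0 x0))).trans
          (E21 x0 x1))
      have E40 : ∀ x0 x1 : Q, (mul x0 (J (mul (mul x0 x1) x0))) = (rd (J x1) x0) := fun x0 x1 => ((E8 (mul x0 (J (mul (mul x0 x1) x0))) x0).symm.trans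
          (congrArg (fun w => (rd w x0)) (E39 x0 x1)))
      have E42 : ∀ x0 x1 : Q, (mul (mul (J x0) (J (mul x1 (J x0)))) (J x0)) = (J (mul x0 x1)) := fun x0 x1 => ((congrArg (fun w => (mul (mul (J x0) (J (mul w (J x0)))) (J x0))) (E18 x0 x1).symm).trans
          (E39 (J x0) (mul x0 x1)))
      have E43 : ∀ x0 : Q, (J (mul x0 x0)) = (mul (J x0) (J x0)) := fun x0 => (((E42 x0 x0).symm.trans
          (congrArg (fun w => (mul (mul (J x0) w) (J x0))) (E29 x0))).trans
          (congrArg (fun w => (mul w (J x0))) (E18 x0 (J x0))))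
      have E49 : ∀ x0 x1 : Q, (J (mul (mul x0 x1) x0)) = (mul (J x0) (rd (J x1) x0)) := fun x0 x1 => ((E18 x0 (J (mul (mul x0 x1) x0))).symm.trans
          (congrArg (fun w => (mul (J x0) w)) (E40 x0 x1)))
      have E53 : ∀ x0 x1 : Q, (J (mul x0 (rd x1 (J x0)))) = (mul (mul (J x0) (J x1)) (J x0)) := fun x0 x1 => ((E42 x0 (rd x1 (J x0))).symm.trans
          (congrArg (fun w => (mul (mul (J x0) (J w)) (J x0))) (E9 x1 (J x0))))
      have E63 : ∀ x0 x1 x2 : Q, (mul (mul (J x0) (rd (rd (mul x0 x2) x1) x0)) (mul x0 x1)) = x2 := fun x0 x1 x2 => (((((congrArg (fun w => (mul (mul (J x0) (rd w x0)) (mul x0 x1))) (E28 x1 (mul x0 x2)).symm).trans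
          (congrArg (fun w => (mul w (mul x0 x1))) (E49 x0 (rd x1 (mul x0 x2))).symm)).trans
          (E20 (mul (mul x0 (rd x1 (mul x0 x2))) x0) (mul x0 x1)).symm).trans
          (congrArg (fun w => (ld (mul (mul x0 (rd x1 (mul x0 x2))) x0) (mul x0 w))) (E9 x1 (mul x0 x2)).symm)).trans
          (E16 x0 (rd x1 (mul x0 x2)) x2))
      have E67 : ∀ x0 : Q, (J (mul (J x0) (mul (J x0) x0))) = (mul (mul (J x0) x0) x0) := fun x0 => ((((((congrArg (fun w => (J (mul w (mul (J x0) x0)))) (E30 x0).symm).trans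
          (E49 (mul (J x0) x0) (J x0))).trans
          (congrArg (fun w => (mul w (rd (J (J x0)) (mul (J x0) x0)))) (E33 x0))).trans
          (congrArg (fun w => (mul (mul (J x0) x0) (rd w (mul (J x0) x0)))) (E23 x0))).trans
          (congrArg (fun w => (mul (mul (J x0) x0) w)) (E21 x0 (J x0)))).trans
          (congrArg (fun w => (mul (mul (J x0) x0) w)) (E23 x0)))
      have E71 : ∀ x0 : Q, (J (mul (mul (J x0) x0) x0)) = (mul (J x0) (mul (J x0) x0)) := fun x0 => ((congrArg (fun w => (J w)) (E67 x0).symm).trans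
          (E23 (mul (J x0) (mul (J x0) x0))))
      have E75 : ∀ x0 x1 x2 : Q, (mul (mul x0 (rd (J x1) (J x0))) (mul (J x0) (mul x1 x2))) = (mul x0 x2) := fun x0 x1 x2 => (((((congrArg (fun w => (mul (mul w (rd (J x1) (J x0))) (mul (J x0) (mul x1 x2)))) (E23 x0).symm).trans
          (congrArg (fun w => (mul w (mul (J x0) (mul x1 x2)))) (E49 (J x0) x1).symm)).trans
          (E20 (mul (mul (J x0) x1) (J x0)) (mul (J x0) (mul x1 x2))).symm).trans
          (congrArg (fun w => (ld (mul (mul (J x0) x1) (J x0)) (mul (J x0) (mul x1 w)))) (E18 x0 x2).symm)).trans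
          (E16 (J x0) x1 (mul x0 x2)))
      have E76 : ∀ x0 x1 x2 : Q, (rd x0 (mul x1 (mul x2 (mul x1 x0)))) = (mul (J x1) (rd (J x2) x1)) := fun x0 x1 x2 => (((congrArg (fun w => (rd x0 w)) (E11 x1 x2 x0).symm).trans
          (E21 x0 (mul (mul x1 x2) x1))).trans
          (E49 x1 x2))
      have E79 : ∀ x0 x1 x2 : Q, (mul x0 (mul x1 (mul (mul (J x1) (rd (J x0) x1)) x2))) = (mul (J x1) x2) := fun x0 x1 x2 => (((congrArg (fun w => (mul x0 (mul x1 (mul w x2)))) (E49 x1 x0).symm).trans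
          (E18 x1 (mul x0 (mul x1 (mul (J (mul (mul x1 x0) x1)) x2)))).symm).trans
          (congrArg (fun w => (mul (J x1) w)) (E22 x1 x0 x2)))
      have E82 : ∀ x0 x1 x2 : Q, (rd (mul (mul x0 x1) x2) (mul (mul (J x1) x0) (mul x1 x2))) = x1 := fun x0 x1 x2 => ((congrArg (fun w => (rd w (mul (mul (J x1) x0) (mul x1 x2)))) (E27 x1 x0 x2).symm).trans
          (E8 x1 (mul (mul (J x1) x0) (mul x1 x2))))
      have E83 : ∀ x0 : Q, (rd x0 (mul (mul x0 x0) (mul (J x0) x0))) = (J x0) := fun x0 => (((congrArg (fun w => (rd x0 (mul (mul w x0) (mul (J x0) x0)))) (E23 x0).symm).trans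
          (congrArg (fun w => (rd w (mul (mul (J (J x0)) x0) (mul (J x0) x0)))) (E15 x0).symm)).trans
          (E82 x0 (J x0) x0))
      have E85 : ∀ x0 : Q, (rd (mul (mul x0 x0) (mul (J x0) x0)) x0) = x0 := fun x0 => (((E28 x0 (mul (mul x0 x0) (mul (J x0) x0))).symm.trans
          (congrArg (fun w => (J w)) (E83 x0))).trans
          (E23 x0))
      have E88 : ∀ x0 : Q, (mul (mul x0 x0) (mul (J x0) x0)) = (mul x0 x0) := fun x0 => ((E9 (mul (mul x0 x0) (mul (J x0) x0)) x0).symm.trans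
          (congrArg (fun w => (mul w x0)) (E85 x0)))
      have E90 : ∀ x0 : Q, (rd (mul x0 x0) (mul (J x0) x0)) = (mul x0 x0) := fun x0 => ((congrArg (fun w => (rd w (mul (J x0) x0))) (E88 x0).symm).trans
          (E8 (mul x0 x0) (mul (J x0) x0)))
      have E91 : ∀ x0 : Q, (mul (mul (J x0) x0) x0) = x0 := fun x0 => ((((congrArg (fun w => (mul (mul (J x0) x0) w)) (E26 x0 x0).symm).trans
          (congrArg (fun w => (mul (mul (J x0) w) (mul x0 (mul (J x0) x0)))) (E8 x0 x0).symm)).trans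
          (congrArg (fun w => (mul (mul (J x0) (rd w x0)) (mul x0 (mul (J x0) x0)))) (E90 x0).symm)).trans
          (E63 x0 (mul (J x0) x0) x0))
      have E92 : ∀ x0 x1 : Q, (mul (mul (mul x0 (J x0)) (rd (J x1) (mul x0 (J x0)))) (mul (mul x0 (J x0)) (mul x1 x0))) = x0 := fun x0 x1 => (((((congrArg (fun w => (mul (mul w (rd (J x1) (mul x0 (J x0)))) (mul (mul x0 (J x0)) (mul x1 x0)))) (E29 x0).symm).trans
          (congrArg (fun w => (mul w (mul (mul x0 (J x0)) (mul x1 x0)))) (E49 (mul x0 (J x0)) x1).symm)).trans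
          (E20 (mul (mul (mul x0 (J x0)) x1) (mul x0 (J x0))) (mul (mul x0 (J x0)) (mul x1 x0))).symm).trans
          (congrArg (fun w => (ld (mul (mul (mul x0 (J x0)) x1) (mul x0 (J x0))) (mul (mul x0 (J x0)) (mul x1 w)))) (E15 x0).symm)).trans
          (E16 (mul x0 (J x0)) x1 x0))
      have E94 : ∀ x0 : Q, (mul (J x0) (mul (J x0) x0)) = (J x0) := fun x0 => ((E71 x0).symm.trans
          (congrArg (fun w => (J w)) (E91 x0)))
      have E95 : ∀ x0 : Q, (mul (J x0) x0) = (mul x0 (J x0)) := fun x0 => (((E8 (mul (J x0) x0) x0).symm.trans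
          (congrArg (fun w => (rd w x0)) (E91 x0))).trans
          (E14 x0))
      have E96 : ∀ x0 : Q, (mul (mul x0 (J x0)) (J x0)) = (J x0) := fun x0 => ((congrArg (fun w => (mul (mul w (J x0)) (J x0))) (E23 x0).symm).trans
          (E91 (J x0)))
      have E97 : ∀ x0 : Q, (mul x0 (mul x0 (J x0))) = x0 := fun x0 => ((((congrArg (fun w => (mul w (mul x0 (J x0)))) (E23 x0).symm).trans
          (congrArg (fun w => (mul (J (J x0)) (mul w (J x0)))) (E23 x0).symm)).trans
          (E94 (J x0))).trans
          (E23 x0))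
      have E99 : ∀ x0 : Q, (rd x0 (mul x0 (J x0))) = x0 := fun x0 => (((congrArg (fun w => (rd x0 w)) (E95 x0).symm).trans
          (E21 x0 (J x0))).trans
          (E23 x0))
      have E120 : ∀ x0 : Q, (mul (J x0) (mul (mul x0 (J x0)) (mul x0 (J x0)))) = (J x0) := fun x0 => (((((((congrArg (fun w => (mul (J x0) (mul w (mul x0 (J x0))))) (E95 x0).symm).trans
          (congrArg (fun w => (mul (J x0) (mul (mul (J x0) w) (mul x0 (J x0))))) (E23 x0).symm)).trans
          (congrArg (fun w => (mul w (mul (mul (J x0) (J (J x0))) (mul x0 (J x0))))) (E96 x0).symm)).trans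
          (congrArg (fun w => (mul (mul w (J x0)) (mul (mul (J x0) (J (J x0))) (mul x0 (J x0))))) (E95 x0).symm)).trans
          (congrArg (fun w => (mul (mul (mul (J x0) w) (J x0)) (mul (mul (J x0) (J (J x0))) (mul x0 (J x0))))) (E23 x0).symm)).trans
          (congrArg (fun w => (mul (mul (mul (J x0) (J (J x0))) w) (mul (mul (J x0) (J (J x0))) (mul x0 (J x0))))) (E99 (J x0)).symm)).trans
          (E92 (J x0) x0))
      have E121 : ∀ x0 : Q, (mul (mul x0 x0) (J x0)) = x0 := fun x0 => (((((congrArg (fun w => (mul (mul x0 w) (J x0))) (E8 x0 (J x0)).symm).trans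
          (congrArg (fun w => (mul (mul x0 (rd w (J x0))) (J x0))) (E29 x0).symm)).trans
          (congrArg (fun w => (mul (mul x0 (rd (J (mul x0 (J x0))) (J x0))) w)) (E120 x0).symm)).trans
          (E75 x0 (mul x0 (J x0)) (mul x0 (J x0)))).trans
          (E97 x0))
      have E123 : ∀ x0 : Q, (mul (mul (J x0) (J x0)) x0) = (J x0) := fun x0 => (((congrArg (fun w => (mul w x0)) (E43 x0).symm).trans
          (congrArg (fun w => (mul (J (mul x0 x0)) w)) (E121 x0).symm)).trans
          (E18 (mul x0 x0) (J x0)))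
      have E149 : ∀ x0 x1 x2 : Q, (mul (mul x0 (J x1)) (mul x1 x2)) = (mul (J x1) (mul (mul x1 x0) x2)) := fun x0 x1 x2 => (((E27 (J x1) x0 (mul x1 x2)).symm.trans
          (congrArg (fun w => (mul (J x1) (mul (mul (J (J x1)) x0) w))) (E18 x1 x2))).trans
          (congrArg (fun w => (mul (J x1) (mul (mul w x0) x2))) (E23 x1)))
      have E150 : ∀ x0 x1 : Q, (mul (mul x0 (mul x1 (J x0))) x0) = (mul x0 x1) := fun x0 x1 => ((((E32 x0 (mul x1 (J x0)) x0).symm.trans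
          (congrArg (fun w => (rd (mul x0 w) x0)) (E149 x1 x0 x0))).trans
          (congrArg (fun w => (rd w x0)) (E26 x0 (mul (mul x0 x1) x0)))).trans
          (E8 (mul x0 x1) x0))
      have E153 : ∀ x0 x1 : Q, (rd (mul x0 x1) x0) = (mul x0 (mul x1 (J x0))) := fun x0 x1 => ((congrArg (fun w => (rd w x0)) (E150 x0 x1).symm).trans
          (E8 (mul x0 (mul x1 (J x0))) x0))
      have E154 : ∀ x0 x1 : Q, (mul (mul x0 x1) x0) = (mul x0 (rd x1 (J x0))) := fun x0 x1 => ((congrArg (fun w => (mul (mul x0 w) x0)) (E9 x1 (J x0)).symm).trans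
          (E150 x0 (rd x1 (J x0))))
      have E155 : ∀ x0 x1 : Q, (mul (J (mul x0 (mul x1 (J x0)))) (mul x0 x1)) = x0 := fun x0 x1 => ((congrArg (fun w => (mul (J (mul x0 (mul x1 (J x0)))) w)) (E150 x0 x1).symm).trans
          (E18 (mul x0 (mul x1 (J x0))) x0))
      have E163 : ∀ x0 x1 : Q, (J (mul x0 (rd x1 (J x0)))) = (mul (J x0) (rd (J x1) x0)) := fun x0 x1 => (((E53 x0 x1).trans
          (E154 (J x0) (J x1))).trans
          (congrArg (fun w => (mul (J x0) (rd (J x1) w))) (E23 x0)))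
      have E168 : ∀ x0 x1 : Q, (mul x0 (rd (rd (J x0) x1) x1)) = (mul (J x1) (J x1)) := fun x0 x1 => ((((congrArg (fun w => (mul x0 w)) (E26 x1 (rd (rd (J x0) x1) x1)).symm).trans
          (congrArg (fun w => (mul x0 (mul x1 (mul (J x1) (rd (rd (J x0) x1) w))))) (E23 x1).symm)).trans
          (congrArg (fun w => (mul x0 (mul x1 w))) (E154 (J x1) (rd (J x0) x1)).symm)).trans
          (E79 x0 x1 (J x1)))
      have E171 : ∀ x0 x1 : Q, (rd x0 (mul x1 x1)) = (mul (mul x0 (J x1)) (J x1)) := fun x0 x1 => (((((congrArg (fun w => (rd x0 (mul x1 w))) (E155 x1 x0).symm).trans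
          (E76 x0 x1 (J (mul x1 (mul x0 (J x1)))))).trans
          (congrArg (fun w => (mul (J x1) (rd w x1))) (E23 (mul x1 (mul x0 (J x1)))))).trans
          (congrArg (fun w => (mul (J x1) w)) (E153 x1 (mul x0 (J x1))))).trans
          (E18 x1 (mul (mul x0 (J x1)) (J x1))))
      have E182 : ∀ x0 x1 : Q, (mul (J x0) (rd (rd x0 x1) x1)) = (mul (J x1) (J x1)) := fun x0 x1 => ((congrArg (fun w => (mul (J x0) (rd (rd w x1) x1))) (E23 x0).symm).trans
          (E168 (J x0) x1))
      have E190 : ∀ x0 x1 : Q, (mul (J (mul x0 x1)) (rd x0 x1)) = (mul (J x1) (J x1)) := fun x0 x1 => ((congrArg (fun w => (mul (J (mul x0 x1)) (rd w x1))) (E8 x0 x1).symm).trans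
          (E182 (mul x0 x1) x1))
      have E197 : ∀ x0 x1 : Q, (rd (mul (J x0) (J x0)) (rd x1 x0)) = (J (mul x1 x0)) := fun x0 x1 => ((congrArg (fun w => (rd w (rd x1 x0))) (E190 x1 x0).symm).trans
          (E8 (J (mul x1 x0)) (rd x1 x0)))
      have E205 : ∀ x0 x1 : Q, (J (mul x0 (mul x1 (rd (J x1) x0)))) = (mul x0 (mul x1 (rd (J x1) x0))) := fun x0 x1 => (((((((((congrArg (fun w => (J (mul x0 (mul x1 w)))) (E26 x0 (rd (J x1) x0)).symm).trans
          (congrArg (fun w => (J (mul x0 (mul x1 (mul x0 w))))) (E163 x0 x1).symm)).trans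
          (congrArg (fun w => (J (mul x0 (mul x1 (mul x0 (J w)))))) (E154 x0 x1).symm)).trans
          (congrArg (fun w => (J w)) (E11 x0 x1 (J (mul (mul x0 x1) x0))).symm)).trans
          (E29 (mul (mul x0 x1) x0))).trans
          (E11 x0 x1 (J (mul (mul x0 x1) x0)))).trans
          (congrArg (fun w => (mul x0 (mul x1 (mul x0 (J w))))) (E154 x0 x1))).trans
          (congrArg (fun w => (mul x0 (mul x1 (mul x0 w)))) (E163 x0 x1))).trans
          (congrArg (fun w => (mul x0 (mul x1 w))) (E26 x0 (rd (J x1) x0))))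
      have E209 : ∀ x0 x1 x2 : Q, (mul (J (mul x0 (J x1))) (mul (J x1) (mul (mul x1 x0) x2))) = (mul x1 x2) := fun x0 x1 x2 => (((congrArg (fun w => (mul (J (mul w (J x1))) (mul (J x1) (mul (mul x1 x0) x2)))) (E18 x1 x0).symm).trans
          (E38 (J x1) (mul x1 x0) x2)).trans
          (congrArg (fun w => (mul w x2)) (E23 x1)))
      have E223 : ∀ x0 x1 x2 : Q, (rd (mul (rd x0 x1) (mul x2 x0)) x1) = (mul (rd x0 x1) (rd x2 (rd x1 x0))) := fun x0 x1 x2 => ((((congrArg (fun w => (rd (mul (rd x0 x1) (mul x2 w)) x1)) (E9 x0 x1).symm).trans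
          (E32 (rd x0 x1) x2 x1)).trans
          (E154 (rd x0 x1) x2)).trans
          (congrArg (fun w => (mul (rd x0 x1) (rd x2 w))) (E28 x0 x1)))
      have E231 : ∀ x0 x1 : Q, (mul x0 (rd (mul (mul x0 x1) (J (mul x0 x1))) (J x0))) = (rd (mul x0 (mul x0 x1)) x1) := fun x0 x1 => (((E154 x0 (mul (mul x0 x1) (J (mul x0 x1)))).symm.trans
          (E32 x0 (mul (mul x0 x1) (J (mul x0 x1))) x1).symm).trans
          (congrArg (fun w => (rd (mul x0 w) x1)) (E15 (mul x0 x1))))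
      have E272 : ∀ x0 x1 : Q, (mul (mul x0 x1) (mul x1 (J x1))) = (mul x1 (mul (mul (J x1) x0) x1)) := fun x0 x1 => ((E27 x1 x0 (mul x1 (J x1))).symm.trans
          (congrArg (fun w => (mul x1 (mul (mul (J x1) x0) w))) (E97 x1)))
      have E285 : ∀ x0 x1 x2 : Q, (mul (mul (mul x0 (J x0)) x1) (mul (mul x0 (J x0)) x2)) = (mul (mul x0 (J x0)) (mul (mul x1 (mul x0 (J x0))) x2)) := fun x0 x1 x2 => (((congrArg (fun w => (mul (mul w x1) (mul (mul x0 (J x0)) x2))) (E29 x0).symm).trans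
          (E36 x0 (mul (mul (J (mul x0 (J x0))) x1) (mul (mul x0 (J x0)) x2))).symm).trans
          (congrArg (fun w => (mul (mul x0 (J x0)) w)) (E27 (mul x0 (J x0)) x1 x2)))
      have E352 : ∀ x0 x1 : Q, (mul (mul x0 (mul x1 (J x1))) (mul x1 (J x1))) = (rd x0 (mul x1 (J x1))) := fun x0 x1 => ((((((congrArg (fun w => (mul (mul x0 (mul x1 (J x1))) w)) (E29 x1).symm).trans
          (congrArg (fun w => (mul (mul x0 w) (J (mul x1 (J x1))))) (E29 x1).symm)).trans
          (E171 x0 (mul x1 (J x1))).symm).trans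
          (congrArg (fun w => (rd x0 w)) (E149 x1 x1 (J x1)))).trans
          (congrArg (fun w => (rd x0 (mul (J x1) w))) (E121 x1))).trans
          (congrArg (fun w => (rd x0 w)) (E95 x1)))
      have E434 : ∀ x0 x1 : Q, (J (mul (mul x0 (J x0)) (rd x1 (mul x0 (J x0))))) = (mul (mul x0 (J x0)) (rd (J x1) (mul x0 (J x0)))) := fun x0 x1 => ((((congrArg (fun w => (J (mul (mul x0 (J x0)) (rd x1 w)))) (E29 x0).symm).trans
          (congrArg (fun w => (J w)) (E154 (mul x0 (J x0)) x1).symm)).trans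
          (E36 x0 (J (mul (mul (mul x0 (J x0)) x1) (mul x0 (J x0))))).symm).trans
          (congrArg (fun w => (mul (mul x0 (J x0)) w)) (E40 (mul x0 (J x0)) x1)))
      have E436 : ∀ x0 x1 : Q, (J (mul (J x0) (mul (mul x0 x1) (J x1)))) = (mul (J x0) (mul (mul x0 x1) (J x1))) := fun x0 x1 => (((((congrArg (fun w => (J w)) (E149 x1 x0 (J x1)).symm).trans
          (congrArg (fun w => (J (mul (mul x1 (J x0)) (mul x0 w)))) (E21 (J x0) x1).symm)).trans
          (E205 (mul x1 (J x0)) x0)).trans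
          (congrArg (fun w => (mul (mul x1 (J x0)) (mul x0 w))) (E21 (J x0) x1))).trans
          (E149 x1 x0 (J x1)))
      have E442 : ∀ x0 x1 : Q, (mul x0 (mul (mul x0 x1) (J (mul x0 x1)))) = (mul (J (mul x1 (J x0))) x1) := fun x0 x1 => (((E209 x1 x0 (mul (mul x0 x1) (J (mul x0 x1)))).symm.trans
          (congrArg (fun w => (mul (J (mul x1 (J x0))) (mul (J x0) w))) (E97 (mul x0 x1)))).trans
          (congrArg (fun w => (mul (J (mul x1 (J x0))) w)) (E18 x0 x1)))
      have E464 : ∀ x0 x1 : Q, (rd (mul (rd x0 x1) (J x0)) x1) = (mul (rd x0 x1) (J (mul x1 x0))) := fun x0 x1 => (((congrArg (fun w => (rd (mul (rd x0 x1) w) x1)) (E123 x0).symm).trans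
          (E223 x0 x1 (mul (J x0) (J x0)))).trans
          (congrArg (fun w => (mul (rd x0 x1) w)) (E197 x0 x1)))
      have E575 : ∀ x0 x1 : Q, (J (mul (J (mul x0 (mul x1 (J x1)))) x0)) = (mul (J (mul x0 (mul x1 (J x1)))) x0) := fun x0 x1 => (((((((congrArg (fun w => (J (mul (J (mul x0 (mul x1 (J x1)))) w))) (E9 x0 (mul x1 (J x1))).symm).trans
          (congrArg (fun w => (J (mul (J (mul x0 (mul x1 (J x1)))) (mul (rd x0 (mul x1 (J x1))) w)))) (E29 x1).symm)).trans
          (congrArg (fun w => (J (mul (J (mul x0 (mul x1 (J x1)))) (mul w (J (mul x1 (J x1))))))) (E352 x0 x1).symm)).trans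
          (E436 (mul x0 (mul x1 (J x1))) (mul x1 (J x1)))).trans
          (congrArg (fun w => (mul (J (mul x0 (mul x1 (J x1)))) (mul w (J (mul x1 (J x1)))))) (E352 x0 x1))).trans
          (congrArg (fun w => (mul (J (mul x0 (mul x1 (J x1)))) (mul (rd x0 (mul x1 (J x1))) w))) (E29 x1))).trans
          (congrArg (fun w => (mul (J (mul x0 (mul x1 (J x1)))) w)) (E9 x0 (mul x1 (J x1)))))
      have E581 : ∀ x0 x1 : Q, (rd (mul x0 (mul x0 x1)) x1) = (mul (mul (J (mul x1 (J x0))) x1) x0) := fun x0 x1 => (((E231 x0 x1).symm.trans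
          (E154 x0 (mul (mul x0 x1) (J (mul x0 x1)))).symm).trans
          (congrArg (fun w => (mul w x0)) (E442 x0 x1)))
      have E597 : ∀ x0 x1 : Q, (J (mul (rd x0 x1) (J (mul x1 x0)))) = (rd x1 (mul (rd x0 x1) (J x0))) := fun x0 x1 => ((congrArg (fun w => (J w)) (E464 x0 x1).symm).trans
          (E28 (mul (rd x0 x1) (J x0)) x1))
      have E685 : ∀ x0 x1 : Q, (J (mul (mul x0 (J x0)) (mul x1 (J x1)))) = (mul (mul x0 (J x0)) (mul x1 (J x1))) := fun x0 x1 => (((((((((((((congrArg (fun w => (J (mul (mul x0 (J x0)) w))) (E95 x1).symm).trans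
          (congrArg (fun w => (J (mul (mul x0 (J x0)) (mul w x1)))) (E9 (J x1) (mul x0 (J x0))).symm)).trans
          (congrArg (fun w => (J w)) (E285 x0 (rd (J x1) (mul x0 (J x0))) x1).symm)).trans
          (congrArg (fun w => (J (mul w (mul (mul x0 (J x0)) x1)))) (E434 x0 x1).symm)).trans
          (congrArg (fun w => (J (mul (J (mul (mul x0 (J x0)) (rd x1 w))) (mul (mul x0 (J x0)) x1)))) (E29 x0).symm)).trans
          (congrArg (fun w => (J (mul (J w) (mul (mul x0 (J x0)) x1)))) (E154 (mul x0 (J x0)) x1).symm)).trans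
          (E575 (mul (mul x0 (J x0)) x1) x0)).trans
          (congrArg (fun w => (mul (J w) (mul (mul x0 (J x0)) x1))) (E154 (mul x0 (J x0)) x1))).trans
          (congrArg (fun w => (mul (J (mul (mul x0 (J x0)) (rd x1 w))) (mul (mul x0 (J x0)) x1))) (E29 x0))).trans
          (congrArg (fun w => (mul w (mul (mul x0 (J x0)) x1))) (E434 x0 x1))).trans
          (E285 x0 (rd (J x1) (mul x0 (J x0))) x1)).trans
          (congrArg (fun w => (mul (mul x0 (J x0)) (mul w x1))) (E9 (J x1) (mul x0 (J x0))))).trans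
          (congrArg (fun w => (mul (mul x0 (J x0)) w)) (E95 x1)))
      have E690 : ∀ x0 x1 : Q, (mul (mul (J (mul x0 (mul x1 (J x1)))) x0) (mul x1 (J x1))) = (mul x0 (J x0)) := fun x0 x1 => ((((((congrArg (fun w => (mul (mul (J (mul x0 (mul x1 (J x1)))) x0) w)) (E14 x1).symm).trans
          (congrArg (fun w => (mul (mul (J (mul x0 w)) x0) (rd x1 x1))) (E29 x1).symm)).trans
          (congrArg (fun w => (mul (mul (J (mul x0 (J w))) x0) (rd x1 x1))) (E14 x1).symm)).trans
          (E581 (rd x1 x1) x0).symm).trans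
          (congrArg (fun w => (rd w x0)) (E34 x1 x1 x0))).trans
          (E14 x0))
      have E744 : ∀ x0 x1 : Q, (mul x0 (mul (mul (J x0) (J (mul x0 (mul x1 (J x1))))) x0)) = (mul x1 (J x1)) := fun x0 x1 => ((((E272 (J (mul x0 (mul x1 (J x1)))) x0).symm.trans
          (congrArg (fun w => (mul w (mul x0 (J x0)))) (E575 x0 x1).symm)).trans
          (congrArg (fun w => (mul (J (mul (J (mul x0 (mul x1 (J x1)))) x0)) w)) (E690 x0 x1).symm)).trans
          (E18 (mul (J (mul x0 (mul x1 (J x1)))) x0) (mul x1 (J x1))))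
      have E786 : ∀ x0 x1 : Q, (mul (mul x0 (J x0)) (mul (mul x1 (J x1)) (mul x0 (J x0)))) = (mul x1 (J x1)) := fun x0 x1 => ((((congrArg (fun w => (mul (mul x0 (J x0)) (mul w (mul x0 (J x0))))) (E36 x0 (mul x1 (J x1))).symm).trans
          (congrArg (fun w => (mul (mul x0 (J x0)) (mul (mul (mul x0 (J x0)) w) (mul x0 (J x0))))) (E685 x0 x1).symm)).trans
          (congrArg (fun w => (mul (mul x0 (J x0)) (mul (mul w (J (mul (mul x0 (J x0)) (mul x1 (J x1))))) (mul x0 (J x0))))) (E29 x0).symm)).trans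
          (E744 (mul x0 (J x0)) x1))
      have E787 : ∀ x0 x1 : Q, (mul x0 (J x0)) = (mul x1 (J x1)) := fun x0 x1 => ((((((((((((((((E29 x0).symm.trans
          (congrArg (fun w => (J w)) (E95 x0).symm)).trans
          (congrArg (fun w => (J (mul (J x0) w))) (E121 x0).symm)).trans
          (congrArg (fun w => (J w)) (E149 x0 x0 (J x0)).symm)).trans
          (congrArg (fun w => (J (mul (mul x0 (J x0)) w))) (E29 x0).symm)).trans
          (congrArg (fun w => (J (mul w (J (mul x0 (J x0)))))) (E8 (mul x0 (J x0)) (mul x1 (J x1))).symm)).trans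
          (congrArg (fun w => (J (mul (rd (mul (mul x0 (J x0)) (mul x1 (J x1))) (mul x1 (J x1))) (J w)))) (E786 x1 x0).symm)).trans
          (E597 (mul (mul x0 (J x0)) (mul x1 (J x1))) (mul x1 (J x1)))).trans
          (congrArg (fun w => (rd (mul x1 (J x1)) (mul w (J (mul (mul x0 (J x0)) (mul x1 (J x1))))))) (E8 (mul x0 (J x0)) (mul x1 (J x1))))).trans
          (congrArg (fun w => (rd (mul x1 (J x1)) (mul (mul x0 (J x0)) w))) (E685 x0 x1))).trans
          (congrArg (fun w => (rd (mul x1 (J x1)) w)) (E36 x0 (mul x1 (J x1))))).trans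
          (E14 (mul x1 (J x1)))).trans
          (congrArg (fun w => (mul (mul x1 (J x1)) w)) (E29 x1))).trans
          (E149 x1 x1 (J x1))).trans
          (congrArg (fun w => (mul (J x1) w)) (E121 x1))).trans
          (E95 x1))
      have G : (mul a (J a)) = (mul b (J b)) := (E787 b a).symm
      exact ⟨G, E15, E23, E26⟩
    obtain ⟨q⟩ := (inferInstance : Nonempty Q)
    exact ⟨fun a b => (key0 a b).1, (key0 q q).2⟩
  obtain ⟨k1, k2, k3, k4⟩ := key
  obtain ⟨q⟩ := (inferInstance : Nonempty Q)
  refine ⟨mul q (J q), fun x => ⟨?_, ?_⟩⟩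
  · rw [k1 q x, k2]
  · rw [k1 q (J x), k3, k4]
end

section
/- A quasigroup satisfying the Moufang identity $((xy)z)y = x(y(zy))$ has a two-sided neutral element, i.e., is a loop. -/
theorem aux_unique (Q : Type*) (mul ld : Q → Q → Q) (i : Q → Q)
    (e0 : ∀ x y, mul (mul x y) (i y) = x) (e1 : ∀ x y, mul (mul x (i y)) y = x)
    (e2 : ∀ x, i (i x) = x)
    (e3 : ∀ x y, ld x (mul x y) = y) (e4 : ∀ x y, mul x (ld x y) = y)
    (e5 : ∀ x y z, mul (mul (mul x y) z) y = mul x (mul y (mul z y))) (c d : Q) :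
    ld c c = ld d d := by
  have e6 : ∀ x0, (i (i x0)) = x0 := by
    intro x0
    have h0 := e2 x0
    clear * - h0
    grind only
  have e7 : ∀ x0 x1, (ld x0 (mul x0 x1)) = x1 := by
    intro x0 x1
    have h0 := e3 x0 x1
    clear * - h0
    grind only
  have e8 : ∀ x0 x1, (mul x0 (ld x0 x1)) = x1 := by
    intro x0 x1
    have h0 := e4 x0 x1
    clear * - h0
    grind only
  have e9 : ∀ x0 x1, (mul (mul x0 x1) (i x1)) = x0 := by
    intro x0 x1
    have h0 := e0 x0 x1
    clear * - h0
    grind only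
  have e10 : ∀ x0 x1, (mul (mul x0 (i x1)) x1) = x0 := by
    intro x0 x1
    have h0 := e1 x0 x1
    clear * - h0
    grind only
  have e11 : ∀ x0 x1, (ld (mul x0 x1) x0) = (i x1) := by
    intro x0 x1
    have h0 := e9 x0 x1
    have h1 := e7 (mul x0 x1) (i x1)
    clear * - h0 h1
    grind only
  have e13 : ∀ x0 x1, (i (ld x0 x1)) = (ld x1 x0) := by
    intro x0 x1
    have h0 := e8 x0 x1
    have h1 := e11 x0 (ld x0 x1)
    clear * - h0 h1
    grind only
  have e14 : ∀ x0 x1 x2, (mul (mul x0 (ld x1 x2)) (ld x2 x1)) = x0 := by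
    intro x0 x1 x2
    have h0 := e13 x1 x2
    have h1 := e9 x0 (ld x1 x2)
    clear * - h0 h1
    grind only
  have e15 : ∀ x0 x1 x2, (mul (mul (mul x0 x1) x2) x1) = (mul x0 (mul x1 (mul x2 x1))) := by
    intro x0 x1 x2
    have h0 := e5 x0 x1 x2
    clear * - h0
    grind only
  have e16 : ∀ x0, (mul x0 (mul (i x0) x0)) = x0 := by
    intro x0
    have h0 := e9 x0 x0
    have h1 := e15 x0 x0 (i x0)
    have h2 := e3 x0 x0
    have h3 := e3 x0 (mul x0 (mul (i x0) x0))
    clear * - h0 h1 h2 h3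
    grind only
  have e17 : ∀ x0, (mul (i x0) x0) = (ld x0 x0) := by
    intro x0
    have h0 := e16 x0
    have h1 := e7 x0 (mul (i x0) x0)
    clear * - h0 h1
    grind only
  have e20 : ∀ x0, (mul (ld x0 x0) (i x0)) = (i x0) := by
    intro x0
    have h0 := e17 x0
    have h1 := e9 (i x0) x0
    clear * - h0 h1
    grind only
  have e24 : ∀ x0, (mul (i x0) (mul x0 (i x0))) = (i x0) := by
    intro x0
    have h0 := e15 x0 (i x0) x0
    have h1 := e9 (mul x0 (i x0)) x0
    have h2 := e3 x0 (mul (i x0) (mul x0 (i x0)))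
    have h3 := e3 x0 (i x0)
    clear * - h0 h1 h2 h3
    grind only
  have e25 : ∀ x0 x1 x2, (mul x0 (mul x1 (mul (ld (mul x0 x1) x2) x1))) = (mul x2 x1) := by
    intro x0 x1 x2
    have h0 := e8 (mul x0 x1) x2
    have h1 := e15 x0 x1 (ld (mul x0 x1) x2)
    clear * - h0 h1
    grind only
  have e28 : ∀ x0 x1 x2, (mul x0 (mul (ld x0 x1) (mul x2 (ld x0 x1)))) = (mul (mul x1 x2) (ld x0 x1)) := by
    intro x0 x1 x2
    have h0 := e8 x0 x1
    have h1 := e15 x0 (ld x0 x1) x2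
    clear * - h0 h1
    grind only
  have e30 : ∀ x0 x1 x2, (mul (mul x0 (mul x1 (mul x2 x1))) (i x1)) = (mul (mul x0 x1) x2) := by
    intro x0 x1 x2
    have h0 := e15 x0 x1 x2
    have h1 := e9 (mul (mul x0 x1) x2) x1
    clear * - h0 h1
    grind only
  have e31 : ∀ x0 x1, (mul (i x0) (mul (mul x0 (mul x1 x0)) (i x0))) = x1 := by
    intro x0 x1
    have h0 := e30 (mul x0 (i x0)) x0 x1
    have h1 := e15 x0 (i x0) (mul x0 (mul x1 x0))
    have h2 := e10 x0 x0
    have h3 := e3 x0 x1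
    have h4 := e3 x0 (mul (i x0) (mul (mul x0 (mul x1 x0)) (i x0)))
    clear * - h0 h1 h2 h3 h4
    grind only
  have e32 : ∀ x0, (mul x0 (i x0)) = (ld x0 x0) := by
    intro x0
    have h0 := e20 x0
    have h1 := e31 (i x0) (ld x0 x0)
    have h2 := e6 x0
    have h3 := e10 (i x0) x0
    clear * - h0 h1 h2 h3
    grind only
  have e37 : ∀ x0, (mul (i x0) (ld x0 x0)) = (i x0) := by
    intro x0
    have h0 := e24 x0
    have h1 := e32 x0
    clear * - h0 h1
    grind only
  have e39 : ∀ x0 x1 x2, (mul (mul x0 (mul (i x1) (mul x2 (i x1)))) x1) = (mul (mul x0 (i x1)) x2) := by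
    intro x0 x1 x2
    have h0 := e15 x0 (i x1) x2
    have h1 := e10 (mul (mul x0 (i x1)) x2) x1
    clear * - h0 h1
    grind only
  have e40 : ∀ x0, (mul (ld x0 x0) (ld x0 x0)) = (ld x0 x0) := by
    intro x0
    have h0 := e37 x0
    have h1 := e28 x0 x0 (i x0)
    have h2 := e20 x0
    have h3 := e32 x0
    clear * - h0 h1 h2 h3
    grind only
  have e42 : ∀ x0 x1, (mul x0 (mul (mul (i x0) x1) x0)) = (mul x1 x0) := by
    intro x0 x1
    have h0 := e9 x1 x0
    have h1 := e31 (i x0) (mul x1 x0)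
    have h2 := e6 x0
    clear * - h0 h1 h2
    grind only
  have e44 : ∀ x0 x1, (mul (mul (i x0) x1) x0) = (ld x0 (mul x1 x0)) := by
    intro x0 x1
    have h0 := e42 x0 x1
    have h1 := e7 x0 (mul (mul (i x0) x1) x0)
    clear * - h0 h1
    grind only
  have e45 : ∀ x0 x1, (mul (ld (i x0) x1) x0) = (mul x0 (mul x1 x0)) := by
    intro x0 x1
    have h0 := e8 (i x0) x1
    have h1 := e42 x0 (ld (i x0) x1)
    clear * - h0 h1
    grind only
  have e49 : ∀ x0 x1, (mul (mul x0 (mul x1 x0)) (i x0)) = (ld (i x0) x1) := by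
    intro x0 x1
    have h0 := e31 x0 x1
    have h1 := e7 (i x0) (mul (mul x0 (mul x1 x0)) (i x0))
    clear * - h0 h1
    grind only
  have e53 : ∀ x0 x1, (mul (mul (i x0) (i x0)) x1) = (ld x0 (ld x0 x1)) := by
    intro x0 x1
    have h0 := e44 x0 (mul (i x0) (mul x1 (i x0)))
    have h1 := e39 (i x0) x0 x1
    have h2 := e44 x0 (mul x1 (i x0))
    have h3 := e10 x1 x0
    clear * - h0 h1 h2 h3
    grind only
  have e59 : ∀ x0 x1, (ld (i x0) (ld (i x0) x1)) = (mul (mul x0 x0) x1) := by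
    intro x0 x1
    have h0 := e45 x0 x1
    have h1 := e49 x0 (ld (i x0) x1)
    have h2 := e30 x0 x0 x1
    clear * - h0 h1 h2
    grind only
  have e71 : ∀ x0 x1, (mul (mul x0 x0) (mul (i x0) x1)) = (ld (i x0) x1) := by
    intro x0 x1
    have h0 := e7 (i x0) x1
    have h1 := e59 x0 (mul (i x0) x1)
    clear * - h0 h1
    grind only
  have e83 : ∀ x0 x1, (mul (i x0) (mul x1 (i x0))) = (mul (ld x0 x1) (i x0)) := by
    intro x0 x1
    have h0 := e6 x0
    have h1 := e45 (i x0) x1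
    clear * - h0 h1
    grind only
  have e141 : ∀ x0 x1, (ld (ld (i x0) x1) (mul x0 x0)) = (i (mul (i x0) x1)) := by
    intro x0 x1
    have h0 := e71 x0 x1
    have h1 := e11 (mul x0 x0) (mul (i x0) x1)
    clear * - h0 h1
    grind only
  have e151 : ∀ x0 x1 x2, (mul x0 (mul (ld (mul x1 x0) x2) x0)) = (ld x1 (mul x2 x0)) := by
    intro x0 x1 x2
    have h0 := e25 x1 x0 x2
    have h1 := e7 x1 (mul x0 (mul (ld (mul x1 x0) x2) x0))
    clear * - h0 h1
    grind only
  have e191 : ∀ x0 x1 x2, (ld x0 (ld x1 (mul x2 x0))) = (mul (ld (mul x1 x0) x2) x0) := by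
    intro x0 x1 x2
    have h0 := e151 x0 x1 x2
    have h1 := e7 x0 (mul (ld (mul x1 x0) x2) x0)
    clear * - h0 h1
    grind only
  have e192 : ∀ x0 x1, (mul (i (mul x0 (mul x1 x0))) x0) = (ld x0 (i x1)) := by
    intro x0 x1
    have h0 := e11 (mul x0 x0) x1
    have h1 := e191 x0 (mul (mul x0 x0) x1) x0
    have h2 := e15 x0 x0 x1
    have h3 := e11 x0 (mul x0 (mul x1 x0))
    clear * - h0 h1 h2 h3
    grind only
  have e193 : ∀ x0 x1, (ld (i (mul x0 (mul x1 x0))) (ld x0 (i x1))) = x0 := by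
    intro x0 x1
    have h0 := e192 x0 x1
    have h1 := e7 (i (mul x0 (mul x1 x0))) x0
    clear * - h0 h1
    grind only
  have e196 : ∀ x0 x1, (ld x0 (i (mul (i x0) x1))) = (mul (i (mul x1 x0)) x0) := by
    intro x0 x1
    have h0 := e141 x0 x1
    have h1 := e191 x0 (ld (i x0) x1) x0
    have h2 := e45 x0 x1
    have h3 := e11 x0 (mul x1 x0)
    clear * - h0 h1 h2 h3
    grind only
  have e197 : ∀ x0 x1, (mul (ld x0 (i x1)) (i x0)) = (i (mul x0 (mul x1 x0))) := by
    intro x0 x1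
    have h0 := e192 x0 x1
    have h1 := e9 (i (mul x0 (mul x1 x0))) x0
    clear * - h0 h1
    grind only
  have e204 : ∀ x0 x1, (mul x0 (mul (i (mul x1 x0)) x0)) = (i (mul (i x0) x1)) := by
    intro x0 x1
    have h0 := e196 x0 x1
    have h1 := e8 x0 (i (mul (i x0) x1))
    clear * - h0 h1
    grind only
  have e270 : ∀ x0 x1 x2, (i (mul (ld (mul x0 x1) x2) x1)) = (ld (ld x0 (mul x2 x1)) x1) := by
    intro x0 x1 x2
    have h0 := e151 x1 x0 x2
    have h1 := e11 x1 (mul (ld (mul x0 x1) x2) x1)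
    clear * - h0 h1
    grind only
  have e271 : ∀ x0 x1, (mul x0 (mul (ld (ld x0 x0) x1) x0)) = (ld (i x0) (mul x1 x0)) := by
    intro x0 x1
    have h0 := e17 x0
    have h1 := e151 x0 (i x0) x1
    clear * - h0 h1
    grind only
  have e298 : ∀ x0 x1 x2, (ld (i (mul x0 (mul (ld x1 x2) x0))) (ld x0 (ld x2 x1))) = x0 := by
    intro x0 x1 x2
    have h0 := e13 x1 x2
    have h1 := e193 x0 (ld x1 x2)
    clear * - h0 h1
    grind only
  have e343 : ∀ x0 x1, (mul (ld (mul x0 x1) (mul x0 x1)) x1) = (mul x0 (i (mul (i x1) x0))) := by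
    intro x0 x1
    have h0 := e32 (mul x0 x1)
    have h1 := e15 x0 x1 (i (mul x0 x1))
    have h2 := e204 x1 x0
    clear * - h0 h1 h2
    grind only
  have e426 : ∀ x0 x1 x2, (mul (ld x0 (ld x1 x2)) (i x0)) = (i (mul x0 (mul (ld x2 x1) x0))) := by
    intro x0 x1 x2
    have h0 := e13 x2 x1
    have h1 := e197 x0 (ld x2 x1)
    clear * - h0 h1
    grind only
  have e496 : ∀ x0 x1, (mul x0 (mul x1 (i (mul (i x0) x1)))) = (ld x1 (mul (mul x1 x0) x0)) := by
    intro x0 x1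
    have h0 := e343 x1 x0
    have h1 := e151 x0 x1 (mul x1 x0)
    clear * - h0 h1
    grind only
  have e682 : ∀ x0 x1 x2, (ld (ld x0 x1) (ld (ld x0 x1) x2)) = (mul (mul (ld x1 x0) (ld x1 x0)) x2) := by
    intro x0 x1 x2
    have h0 := e13 x0 x1
    have h1 := e53 (ld x0 x1) x2
    clear * - h0 h1
    grind only
  have e713 : ∀ x0 x1, (ld (ld x0 (mul (mul x0 x1) x1)) x1) = (i (mul x0 (i (mul (i x1) x0)))) := by
    intro x0 x1
    have h0 := e343 x0 x1
    have h1 := e270 x0 x1 (mul x0 x1)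
    clear * - h0 h1
    grind only
  have e714 : ∀ x0 x1, (i (mul x0 (i (mul (ld x1 x1) x0)))) = (ld (ld x0 x0) (ld x1 x1)) := by
    intro x0 x1
    have h0 := e14 x0 x1 x1
    have h1 := e713 x0 (ld x1 x1)
    have h2 := e13 x1 x1
    clear * - h0 h1 h2
    grind only
  have e715 : ∀ x0 x1, (mul (ld (ld x0 x0) (ld x1 x1)) (mul (ld x0 x0) x1)) = x1 := by
    intro x0 x1
    have h0 := e714 x1 x0
    have h1 := e204 (i (mul (ld x0 x0) x1)) x1
    have h2 := e83 (mul (ld x0 x0) x1) (ld (ld x1 x1) (ld x0 x0))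
    have h3 := e426 (mul (ld x0 x0) x1) (ld x1 x1) (ld x0 x0)
    have h4 := e6 (mul (ld x0 x0) x1)
    have h5 := e2 (mul (mul (ld x0 x0) x1) (mul (ld (ld x0 x0) (ld x1 x1)) (mul (ld x0 x0) x1)))
    have h6 := e2 (mul (mul (ld x0 x0) x1) x1)
    have h7 := e3 (mul (ld x0 x0) x1) (mul (ld (ld x0 x0) (ld x1 x1)) (mul (ld x0 x0) x1))
    have h8 := e3 (mul (ld x0 x0) x1) x1
    clear * - h0 h1 h2 h3 h4 h5 h6 h7 h8
    grind only
  have e717 : ∀ x0 x1, (mul x0 (i (mul (ld x1 x1) x0))) = (ld (ld x1 x1) (ld x0 x0)) := by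
    intro x0 x1
    have h0 := e714 x0 x1
    have h1 := e6 (mul x0 (i (mul (ld x1 x1) x0)))
    have h2 := e13 (ld x0 x0) (ld x1 x1)
    clear * - h0 h1 h2
    grind only
  have e718 : ∀ x0 x1, (ld x0 (ld (ld x1 x1) (ld x0 x0))) = (i (mul (ld x1 x1) x0)) := by
    intro x0 x1
    have h0 := e715 x1 x0
    have h1 := e11 (ld (ld x1 x1) (ld x0 x0)) (mul (ld x1 x1) x0)
    clear * - h0 h1
    grind only
  have e721 : ∀ x0 x1, (ld (ld (mul (ld x0 x0) x1) (i x1)) (i (mul (ld x0 x0) x1))) = x1 := by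
    intro x0 x1
    have h0 := e718 x1 x0
    have h1 := e298 x1 (ld x1 x1) (ld x0 x0)
    have h2 := e271 x1 (ld x0 x0)
    have h3 := e13 (i x1) (mul (ld x0 x0) x1)
    clear * - h0 h1 h2 h3
    grind only
  have e722 : ∀ x0 x1, (ld (ld x0 x0) (ld x1 x1)) = (ld x0 x0) := by
    intro x0 x1
    have h0 := e496 (ld x0 x0) x1
    have h1 := e721 x0 (mul x1 (i (mul (i (ld x0 x0)) x1)))
    have h2 := e14 x1 x0 x0
    have h3 := e13 x0 x0
    have h4 := e717 x1 x0
    have h5 := e13 (ld x0 x0) (ld x1 x1)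
    have h6 := e682 x1 x1 (ld x0 x0)
    have h7 := e40 x1
    have h8 := e8 (ld x0 x0) (ld x1 x1)
    have h9 := e13 x1 x1
    have h10 := e11 (ld x1 x1) (ld x0 x0)
    clear * - h0 h1 h2 h3 h4 h5 h6 h7 h8 h9 h10
    grind only
  have e724 : ∀ x0 x1, (ld x0 x0) = (ld x1 x1) := by
    intro x0 x1
    have h0 := e722 x0 x1
    have h1 := e8 (ld x0 x0) (ld x1 x1)
    have h2 := e40 x0
    clear * - h0 h1 h2
    grind only
  have goal : ∀ (_u : Unit), (ld c c) = (ld d d) := by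
    intro _
    have h0 := e724 c d
    clear * - h0
    grind only
  exact goal ()

theorem moufang_quasigroup_is_loop_M4 (Q : Type*) (mul ld rd : Q → Q → Q)
    (hQ1 : ∀ x y, ld x (mul x y) = y) (hQ2 : ∀ x y, mul x (ld x y) = y)
    (hQ3 : ∀ x y, rd (mul x y) y = x) (hQ4 : ∀ x y, mul (rd x y) y = x)
    [Nonempty Q]
    (hid : ∀ x y z, mul (mul (mul x y) z) y = mul x (mul y (mul z y))) :
    ∃ e : Q, ∀ x, mul e x = x ∧ mul x e = x := by
  have hinv : ∀ y, ∃ z, ∀ w, mul (mul w z) y = w := by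
    intro y
    refine ⟨rd (ld y y) y, fun w => ?_⟩
    have h := hid (rd w y) y (rd (ld y y) y)
    rw [hQ4, hQ4, hQ2, hQ4] at h
    exact h
  choose i e1' using hinv
  have e1 : ∀ x y, mul (mul x (i y)) y = x := fun x y => e1' y x
  have e0 : ∀ x y, mul (mul x y) (i y) = x := by
    intro x y
    have h := e1 (mul x y) y
    rw [← hQ3 (mul (mul x y) (i y)) y, h, hQ3]
  have e2 : ∀ x, i (i x) = x := by
    intro x
    have h1 := e0 x (i x)
    have h2 := e1 x x
    have h3 := hQ1 (mul x (i x)) (i (i x))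
    have h4 := hQ1 (mul x (i x)) x
    rw [h1] at h3
    rw [h2] at h4
    exact h3.symm.trans h4
  have key := aux_unique Q mul ld i e0 e1 e2 hQ1 hQ2 hid
  obtain ⟨c⟩ := ‹Nonempty Q›
  have hr : ∀ x, mul x (ld c c) = x := by
    intro x
    rw [key c x]
    exact hQ2 x x
  refine ⟨ld c c, fun x => ⟨?_, hr x⟩⟩
  have h := hid c (ld c c) x
  rw [hr, hr, hr] at h
  rw [← hQ1 c (mul (ld c c) x), ← h, hQ1]
end

section
/- In a loop, the three extra-loop identities $(x(yz))y = (xy)(zy)$, $((xy)z)x = x(y(zx))$, and $(yz)(yx) = y((zy)x)$ are pairwise equivalent: if a loop satisfies any one of them, it satisfies all three. -/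
theorem extra_aux12 {Q : Type*} (mul ld rd : Q → Q → Q) (e : Q)
    (hQ1 : ∀ x y, ld x (mul x y) = y) (hQ2 : ∀ x y, mul x (ld x y) = y)
    (hQ3 : ∀ x y, rd (mul x y) y = x)
    (hL : ∀ x, mul e x = x) (hR : ∀ x, mul x e = x)
    (h : ∀ x y z, mul (mul x (mul y z)) y = mul (mul x y) (mul z y)) :
    ∀ x y z, mul (mul (mul x y) z) x = mul x (mul y (mul z x)) := by
  have lc : ∀ a b c, mul a b = mul a c → b = c := fun a b c k => by
    rw [← hQ1 a b, k, hQ1]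
  have rc : ∀ a b c, mul b a = mul c a → b = c := fun a b c k => by
    rw [← hQ3 b a, k, hQ3]
  have fl : ∀ y z, mul (mul y z) y = mul y (mul z y) := fun y z => by
    have := h e y z; rwa [hL, hL] at this
  obtain ⟨i, hi⟩ : ∃ i : Q → Q, ∀ y, mul y (i y) = e := ⟨fun y => ld y e, fun y => hQ2 y e⟩
  have hi' : ∀ y, mul (i y) y = e := fun y => by
    apply lc y; rw [← fl, hi, hL, hR]
  have lip : ∀ y z, mul (i y) (mul y z) = z := fun y z => by
    apply rc y; rw [h, hi', hL]
  have lip' : ∀ y z, mul y (mul (i y) z) = z := fun y z => by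
    apply lc (i y); rw [lip]
  have s : ∀ a w y, mul (mul a w) y = mul (mul a y) (mul (mul (i y) w) y) := fun a w y => by
    rw [← h, lip']
  have key : ∀ c d y, mul (mul (i y) c) (mul d y) = mul (mul (i y) (mul c d)) y := fun c d y => by
    have aa : mul (mul (i y) c) y = mul (i (mul (i c) y)) y := by
      apply lc (mul (i c) y)
      rw [← s, hi', hL, lip']
    have aa := rc _ _ _ aa
    rw [aa]
    apply lc (mul (i c) y)
    rw [lip', ← s, lip]
  intro x y z
  have := key (mul x y) z x
  rw [lip] at this
  rw [this, ← fl, lip']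

theorem extra_aux21 {Q : Type*} (mul ld rd : Q → Q → Q) (e : Q)
    (hQ1 : ∀ x y, ld x (mul x y) = y) (hQ2 : ∀ x y, mul x (ld x y) = y)
    (hQ3 : ∀ x y, rd (mul x y) y = x)
    (hL : ∀ x, mul e x = x) (hR : ∀ x, mul x e = x)
    (h : ∀ x y z, mul (mul (mul x y) z) x = mul x (mul y (mul z x))) :
    ∀ x y z, mul (mul x (mul y z)) y = mul (mul x y) (mul z y) := by
  have lc : ∀ a b c, mul a b = mul a c → b = c := fun a b c k => by
    rw [← hQ1 a b, k, hQ1]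
  have rc : ∀ a b c, mul b a = mul c a → b = c := fun a b c k => by
    rw [← hQ3 b a, k, hQ3]
  have fl : ∀ y z, mul (mul y z) y = mul y (mul z y) := fun y z => by
    have := h y z e; rwa [hR, hL] at this
  obtain ⟨i, hi⟩ : ∃ i : Q → Q, ∀ y, mul y (i y) = e := ⟨fun y => ld y e, fun y => hQ2 y e⟩
  have hi' : ∀ y, mul (i y) y = e := fun y => by
    apply lc y; rw [← fl, hi, hL, hR]
  have rip : ∀ x w, mul (mul w (i x)) x = w := fun x w => by
    have := h x (ld x w) (i x)
    rwa [hQ2, hi', hR, hQ2] at this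
  have lip' : ∀ x w, mul x (mul (i x) w) = w := fun x w => by
    have := h x (i x) (mul w (i x))
    rw [rip, hi, hL, rip] at this
    exact this.symm
  have lip : ∀ y z, mul (i y) (mul y z) = z := fun y z => by
    apply lc y; rw [lip']
  have ii : ∀ x, i (i x) = x := fun x => by
    apply lc (i x); rw [hi, hi']
  have rip' : ∀ x w, mul (mul w x) (i x) = w := fun x w => by
    have := rip (i x) w; rwa [ii] at this
  have key : ∀ c d y, mul (mul (i y) c) (mul d y) = mul (mul (i y) (mul c d)) y := fun c d y => by
    apply lc y
    rw [← h, lip', ← fl, lip']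
  have aa : ∀ a y, mul (i y) (i a) = i (mul a y) := fun a y => by
    apply lc (mul a y)
    rw [hi]
    apply rc a
    have := lip y (i a)
    rw [← rip' a (mul (mul a y) (mul (i y) (i a))), rip']
    have k : mul (i y) (i a) = mul (i (mul a y)) e := by
      have k1 : mul (i (mul a y)) a = i y := by
        have := lip (mul a y) (i y)
        rwa [rip'] at this
      rw [hR, ← k1, rip']
    rw [k, hR, hi]
  intro a y z
  have := key (i a) (mul a (mul y z)) y
  rw [aa, lip, lip] at this
  rw [← this, lip']


/-- In a loop, the three extra-loop identities are pairwise equivalent. -/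
theorem extra_identities_equivalent_in_loops (Q : Type*) (mul ld rd : Q → Q → Q) (e : Q)
    (hQ1 : ∀ x y, ld x (mul x y) = y) (hQ2 : ∀ x y, mul x (ld x y) = y)
    (hQ3 : ∀ x y, rd (mul x y) y = x) (hQ4 : ∀ x y, mul (rd x y) y = x)
    (hL : ∀ x, mul e x = x) (hR : ∀ x, mul x e = x) :
    ((∀ x y z, mul (mul x (mul y z)) y = mul (mul x y) (mul z y)) ↔
      (∀ x y z, mul (mul (mul x y) z) x = mul x (mul y (mul z x)))) ∧
    ((∀ x y z, mul (mul x (mul y z)) y = mul (mul x y) (mul z y)) ↔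
      (∀ x y z, mul (mul y z) (mul y x) = mul y (mul (mul z y) x))) := by

  have h12 := extra_aux12 mul ld rd e hQ1 hQ2 hQ3 hL hR
  have h21 := extra_aux21 mul ld rd e hQ1 hQ2 hQ3 hL hR
  have o12 := extra_aux12 (fun x y => mul y x) (fun x y => rd y x) (fun x y => ld y x) e
    (fun x y => hQ3 y x) (fun x y => hQ4 y x) (fun x y => hQ1 y x) hR hL
  have o21 := extra_aux21 (fun x y => mul y x) (fun x y => rd y x) (fun x y => ld y x) e
    (fun x y => hQ3 y x) (fun x y => hQ4 y x) (fun x y => hQ1 y x) hR hL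
  refine ⟨⟨h12, h21⟩, fun h x y z => ?_, fun h => h21 fun x y z => ?_⟩
  · exact (o21 (fun x y z => (h12 h x z y).symm) x y z).symm
  · exact (o12 (fun x y z => (h x y z).symm) x z y).symm
end

section
/- Every diassociative A-loop is a Moufang loop (the Bruck–Paige conjecture): if every inner mapping of a loop $Q$ is an automorphism of $Q$ and every subloop of $Q$ generated by two elements is a group, then $Q$ satisfies the Moufang identity $x(y(xz))=((xy)x)z$. -/
/-- Left translation of a quasigroup, as a permutation. -/
def leftTr {Q : Type*} (mul ld : Q → Q → Q)
    (h1 : ∀ x y, ld x (mul x y) = y) (h2 : ∀ x y, mul x (ld x y) = y)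
    (x : Q) : Equiv.Perm Q :=
  ⟨fun y => mul x y, fun y => ld x y, fun y => h1 x y, fun y => h2 x y⟩

/-- Right translation of a quasigroup, as a permutation. -/
def rightTr {Q : Type*} (mul rd : Q → Q → Q)
    (h3 : ∀ x y, rd (mul x y) y = x) (h4 : ∀ x y, mul (rd x y) y = x)
    (x : Q) : Equiv.Perm Q :=
  ⟨fun y => mul y x, fun y => rd y x, fun y => h3 y x, fun y => h4 y x⟩

/-- The subloop generated by two elements: the smallest subset containing
`a`, `b`, the neutral element `e`, and closed under `mul`, `ld`, `rd`. -/
def genSubloop {Q : Type*} (mul ld rd : Q → Q → Q) (e a b : Q) : Set Q :=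
  ⋂₀ {T : Set Q | a ∈ T ∧ b ∈ T ∧ e ∈ T ∧
    (∀ x ∈ T, ∀ y ∈ T, mul x y ∈ T) ∧
    (∀ x ∈ T, ∀ y ∈ T, ld x y ∈ T) ∧
    (∀ x ∈ T, ∀ y ∈ T, rd x y ∈ T)}

section Core

theorem dal_core {Q : Type*} (m : Q → Q → Q) (i : Q → Q) (e : Q)
    (l c : Q → Q → Q → Q)
    (e1 : ∀ x, m e x = x) (e2 : ∀ x, m x e = x)
    (i1 : ∀ x y, m (i x) (m x y) = y) (i2 : ∀ x y, m (m y x) (i x) = y)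
    (i3 : ∀ x y, m x (m (i x) y) = y) (i4 : ∀ x y, m (m y (i x)) x = y)
    (ii : ∀ x, i (i x) = x) (im : ∀ x y, i (m x y) = m (i y) (i x))
    (ralt : ∀ x y, m (m y x) x = m y (m x x))
    (ld : ∀ x y z, l x y z = m (i (m x y)) (m x (m y z)))
    (cd : ∀ x z w, c x z w = m (m z (m (m (i z) w) x)) (i x))
    (la : ∀ x y z w, l x y (m z w) = m (l x y z) (l x y w))
    (ca : ∀ x y z w, c x y (m z w) = m (c x y z) (c x y w)) :
    ∀ x y z, m x (m y (m x z)) = m (m (m x y) x) z := by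
  have lc : ∀ x y z, m x y = m x z → y = z := fun x y z h => by
    rw [← i1 x y, h, i1]
  have rc : ∀ x y z, m y x = m z x → y = z := fun x y z h => by
    rw [← i2 x y, h, i2]
  have xi : ∀ x, m x (i x) = e := fun x => by
    have := i2 x e
    rwa [e1] at this
  have ix : ∀ x, m (i x) x = e := fun x => by
    have := i1 x e
    rwa [e2] at this
  have auI : ∀ f : Q → Q, (∀ z w, f (m z w) = m (f z) (f w)) → ∀ z, f (i z) = i (f z) := by
    intro f hf z
    have fe : f e = e := by
      apply lc (f e)
      rw [← hf, e1, e2]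
    apply lc (f z)
    rw [← hf, xi, fe, xi]
  have lI : ∀ x y z, l x y (i z) = i (l x y z) := fun x y => auI _ (la x y)
  have cI : ∀ x y z, c x y (i z) = i (c x y z) := fun x y => auI _ (ca x y)
  -- right form of l
  have rdef : ∀ x y z, l x y z = m (m (m z (i y)) (i x)) (m x y) := by
    intro x y z
    have h := lI x y (i z)
    rw [ii] at h
    rw [h, ld]
    simp only [im, ii]
  have lfix : ∀ x y, l (i y) (i x) (m x y) = m x y := by
    intro x y
    rw [ld, i1, ix, e2, ← im, ii]
  have linvd : ∀ x y w, l (i y) (i x) w = m (m x y) (m (i y) (m (i x) w)) := by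
    intro x y w
    rw [ld, ← im, ii]
  have linv : ∀ x y z, l (i y) (i x) (l x y z) = z := by
    intro x y z
    rw [ld x y z, la, lI, lfix, linvd, i1, i1, i1]
  have lxy : ∀ x y, l x y (m x y) = m x y := by
    intro x y
    have := lfix (i y) (i x)
    rw [ii, ii] at this
    rw [← im, lI] at this
    rw [← ii (l x y (m x y)), this, ii]
  have lm1 : ∀ x y z, l (i x) (m x y) z = l (i y) (i x) z := by
    intro x y z
    apply lc (m x y)
    have h := la (i y) (i x) (m x y) z
    rw [lfix] at h
    rw [← h, linvd, ld, i1]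
  have cJ : ∀ x y w, c x y w = m x (m (m (i x) (m w y)) (i y)) := by
    intro x y w
    have h := cI x y (i w)
    rw [ii] at h
    rw [h, cd, im, ii, im, im, im, ii, ii]
  have cinv : ∀ x y w, c y x (c x y w) = w := by
    intro x y w
    rw [cJ x y, cd y x, i1, i4, i3, i2]
  have cx : ∀ x y, c x y x = x := by
    intro x y
    rw [cd, ralt, i3, i2]
  have cy : ∀ x y, c x y y = y := by
    intro x y
    rw [cd, ix, e1, i2]
  have ci1 : ∀ x y w, c (i x) y w = c y x w := by
    intro x y w
    have h : c x y (c (i x) y w) = w := by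
      rw [cd (i x) y w, ii, ca, cx, cd, i1, i4, i4, i3]
    have h2 := cinv x y (c (i x) y w)
    rw [h] at h2
    exact h2.symm
  have ci2 : ∀ x y w, c x (i y) w = c y x w := by
    intro x y w
    have h := cinv x (i y) w
    rw [ci1] at h
    have h2 := cinv x y (c x (i y) w)
    rw [h] at h2
    exact h2.symm
  have lyy : ∀ x y, l x y y = y := by
    intro x y
    rw [rdef, xi, e1, i1]
  have A : ∀ x y z, c z x (m (m x y) z) = m x (m y z) := by
    intro x y z
    rw [ca, cx, cd, i1, i4]
  have B : ∀ x y z, l x y (m (m x y) z) = m x (m y z) := by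
    intro x y z
    rw [la, lxy, ld, i3]
  have C : ∀ x y z, l y z (m (m x y) z) = m x (m y z) := by
    intro x y z
    rw [rdef, i2, i2]
  have k2 : ∀ x y z, l x y (m z x) = c y z (m z x) := by
    intro x y z
    apply rc y
    have h := (C z x y).trans (A z x y).symm
    rw [la, ca, lyy, cx] at h
    exact h
  have k3 : ∀ x y z, l x y (m (i x) z) = c z y (m (i x) z) := by
    intro x y z
    have h := (B y (m (i y) (i x)) z).trans (A y (m (i y) (i x)) z).symm
    rw [i3] at h
    have h2 := lm1 (i y) (i x)
    simp only [ii] at h2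
    rw [h2] at h
    exact h
  have t168 : ∀ x y z, l (m x y) z y = c x z y := by
    intro x y z
    have h := k2 (m x y) z (i x)
    rw [i1, ci2] at h
    exact h
  have t174 : ∀ x y z, c (m x y) z y = l x z y := by
    intro x y z
    have h := k3 x z (m x y)
    rw [i1] at h
    exact h.symm
  have t342 : ∀ x y z, l x (i (m y x)) z = l y x z := by
    intro x y z
    have h := lm1 (i x) (i y) z
    rw [← im, ii, ii] at h
    exact h
  have t388 : ∀ x y z, l x (i (m y z)) (c x y z) = z := by
    intro x y z
    have h := linv (m y z) (i x) z
    rw [ii, t168, ci2] at h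
    exact h
  have t397 : ∀ x y z, l (i (m x y)) z x = c z y x := by
    intro x y z
    rw [← t174, im, i4, ci1]
  have t671 : ∀ x y z, c (m x y) (m z x) (l z x y) = y := by
    intro x y z
    rw [← ci1, ← t342, ← t174, cinv]
  have t672 : ∀ x y z, l x (m y z) z = l x y z := by
    intro x y z
    have h := t388 (m y z) (m x y) (l x y z)
    rw [t671] at h
    have h3 : m x (m y z) = m (m x y) (l x y z) := by rw [ld, i3]
    rw [← t342 (m y z) x z, h3]
    exact h
  have key : ∀ x y z, l x y z = c x y z := by
    intro x y z
    rw [← t174, ← t397, t672, t397]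
  have cm : ∀ x z w, c (m x z) x w = c z x w := by
    intro x z w
    have h := lm1 x z w
    rw [key, key, ci1, ci1, ci1] at h
    exact h
  intro x y z
  rw [← A x y (m x z), cm, ← C (m x y) x z, key, cinv]

end Core

/-- Bruck–Paige conjecture: every diassociative A-loop is Moufang. -/
theorem diassociative_Aloop_is_moufang (Q : Type*) (mul ld rd : Q → Q → Q) (e : Q)
    (hQ1 : ∀ x y, ld x (mul x y) = y) (hQ2 : ∀ x y, mul x (ld x y) = y)
    (hQ3 : ∀ x y, rd (mul x y) y = x) (hQ4 : ∀ x y, mul (rd x y) y = x)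
    (hL : ∀ x, mul e x = x) (hR : ∀ x, mul x e = x)
    -- A-loop: every inner mapping (element of Mlt(Q) fixing e) is an automorphism
    (hA : ∀ φ ∈ Subgroup.closure
        (Set.range (leftTr mul ld hQ1 hQ2) ∪ Set.range (rightTr mul rd hQ3 hQ4)),
      φ e = e → ∀ a b : Q, φ (mul a b) = mul (φ a) (φ b))
    -- diassociativity: every 2-generated subloop is associative (hence a group)
    (hD : ∀ a b : Q, ∀ x ∈ genSubloop mul ld rd e a b, ∀ y ∈ genSubloop mul ld rd e a b,
      ∀ z ∈ genSubloop mul ld rd e a b, mul x (mul y z) = mul (mul x y) z) :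
    ∀ x y z, mul x (mul y (mul x z)) = mul (mul (mul x y) x) z := by
  set i : Q → Q := fun x => ld x e with hi
  have lcan : ∀ x y z, mul x y = mul x z → y = z := fun x y z h => by
    rw [← hQ1 x y, h, hQ1]
  have rcan : ∀ x y z, mul y x = mul z x → y = z := fun x y z h => by
    rw [← hQ3 y x, h, hQ3]
  have ga : ∀ a b, a ∈ genSubloop mul ld rd e a b := fun a b T hT => hT.1
  have gb : ∀ a b, b ∈ genSubloop mul ld rd e a b := fun a b T hT => hT.2.1
  have ge : ∀ a b, e ∈ genSubloop mul ld rd e a b := fun a b T hT => hT.2.2.1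
  have gm : ∀ a b, ∀ x ∈ genSubloop mul ld rd e a b, ∀ y ∈ genSubloop mul ld rd e a b,
      mul x y ∈ genSubloop mul ld rd e a b :=
    fun a b x hx y hy T hT => hT.2.2.2.1 x (hx T hT) y (hy T hT)
  have gi : ∀ a b, ∀ x ∈ genSubloop mul ld rd e a b, i x ∈ genSubloop mul ld rd e a b :=
    fun a b x hx T hT => hT.2.2.2.2.1 x (hx T hT) e hT.2.2.1
  have xi : ∀ x, mul x (i x) = e := fun x => hQ2 x e
  have ix : ∀ x, mul (i x) x = e := fun x => by
    apply lcan x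
    rw [hD x x x (ga x x) (i x) (gi x x x (ga x x)) x (ga x x), xi, hL, hR]
  have i1 : ∀ x y, mul (i x) (mul x y) = y := fun x y => by
    rw [hD x y (i x) (gi x y x (ga x y)) x (ga x y) y (gb x y), ix, hL]
  have i3 : ∀ x y, mul x (mul (i x) y) = y := fun x y => by
    rw [hD x y x (ga x y) (i x) (gi x y x (ga x y)) y (gb x y), xi, hL]
  have i2 : ∀ x y, mul (mul y x) (i x) = y := fun x y => by
    rw [← hD x y y (gb x y) x (ga x y) (i x) (gi x y x (ga x y)), xi, hR]
  have i4 : ∀ x y, mul (mul y (i x)) x = y := fun x y => by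
    rw [← hD x y y (gb x y) (i x) (gi x y x (ga x y)) x (ga x y), ix, hR]
  have ii : ∀ x, i (i x) = x := fun x => by
    apply lcan (i x)
    rw [xi, ix]
  have im : ∀ x y, i (mul x y) = mul (i y) (i x) := fun x y => by
    apply lcan (mul x y)
    rw [xi, ← hD x y x (ga x y) y (gb x y) _ (gm x y _ (gi x y y (gb x y)) _ (gi x y x (ga x y))),
      i3, xi]
  have ralt : ∀ x y, mul (mul y x) x = mul y (mul x x) := fun x y =>
    (hD x y y (gb x y) x (ga x y) x (ga x y)).symm
  set G := Subgroup.closure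
        (Set.range (leftTr mul ld hQ1 hQ2) ∪ Set.range (rightTr mul rd hQ3 hQ4)) with hG
  have hGL : ∀ x, leftTr mul ld hQ1 hQ2 x ∈ G := fun x =>
    Subgroup.subset_closure (Or.inl ⟨x, rfl⟩)
  have hGR : ∀ x, rightTr mul rd hQ3 hQ4 x ∈ G := fun x =>
    Subgroup.subset_closure (Or.inr ⟨x, rfl⟩)
  refine dal_core mul i e (fun x y z => mul (i (mul x y)) (mul x (mul y z)))
    (fun x z w => mul (mul z (mul (mul (i z) w) x)) (i x))
    hL hR i1 i2 i3 i4 ii im ralt (fun _ _ _ => rfl) (fun _ _ _ => rfl) ?_ ?_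
  · intro x y z w
    exact hA (leftTr mul ld hQ1 hQ2 (i (mul x y)) * (leftTr mul ld hQ1 hQ2 x *
      leftTr mul ld hQ1 hQ2 y)) (G.mul_mem (hGL _) (G.mul_mem (hGL _) (hGL _)))
      (show mul (i (mul x y)) (mul x (mul y e)) = e by rw [hR, ix]) z w
  · intro x y z w
    exact hA (rightTr mul rd hQ3 hQ4 (i x) * (leftTr mul ld hQ1 hQ2 y *
      (rightTr mul rd hQ3 hQ4 x * leftTr mul ld hQ1 hQ2 (i y))))
      (G.mul_mem (hGR _) (G.mul_mem (hGL _) (G.mul_mem (hGR _) (hGL _))))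
      (show mul (mul y (mul (mul (i y) e) x)) (i x) = e by rw [hR, i3, xi]) z w
end

section
/- Every commutative A-loop that is diassociative is a Moufang loop (Osborn's theorem): if $Q$ is a commutative loop in which every inner mapping is an automorphism, and every 2-generated subloop is a group, then $Q$ satisfies the Moufang identity $x(y(xz))=((xy)x)z$. -/
class ADL (Q : Type*) extends Mul Q, One Q, Inv Q where
  comm : ∀ x y : Q, x * y = y * x
  one_l : ∀ x : Q, 1 * x = x
  ip : ∀ x y : Q, x⁻¹ * (x * y) = y
  ip' : ∀ x y : Q, x * (x⁻¹ * y) = y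
  alt : ∀ x y : Q, x * (x * y) = (x * x) * y
  sqm : ∀ x y : Q, (x * y) * (x * y) = (x * x) * (y * y)
  cbm : ∀ x y : Q, (x * y) * ((x * y) * (x * y)) = (x * (x * x)) * (y * (y * y))
  auto : ∀ x y a b : Q, (x * y)⁻¹ * (x * (y * (a * b))) =
    ((x * y)⁻¹ * (x * (y * a))) * ((x * y)⁻¹ * (x * (y * b)))

namespace ADL
variable {Q : Type*} [ADL Q]

theorem cancel {x y z : Q} (h : x * y = x * z) : y = z := by
  rw [← ip x y, h, ip]

theorem cancel_r {x y z : Q} (h : y * x = z * x) : y = z := by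
  rw [comm y, comm z] at h; exact cancel h

theorem one_r (x : Q) : x * 1 = x := by rw [comm, one_l]

theorem inv_m (x : Q) : x⁻¹ * x = 1 := by
  have := ip x 1
  rwa [one_r] at this

theorem inv_inv' (x : Q) : x⁻¹⁻¹ = x := by
  apply cancel (x := x⁻¹)
  rw [inv_m, comm, inv_m]

theorem mul_inv' (x y : Q) : (x * y)⁻¹ = x⁻¹ * y⁻¹ := by
  have h1 : (x * y) * x⁻¹ = y := by rw [comm, ip]
  have h2 : (x * y)⁻¹ * y = x⁻¹ := by
    have := ip (x * y) x⁻¹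
    rwa [h1] at this
  rw [← h2, comm _ y⁻¹, comm (x * y)⁻¹ y, ip]

/-- inner mapping -/
def F (x y z : Q) : Q := (x * y)⁻¹ * (x * (y * z))

theorem Fm (x y a b : Q) : F x y (a * b) = F x y a * F x y b := auto x y a b

theorem Fd (x y z : Q) : x * (y * z) = (x * y) * F x y z := by rw [F, ip']

theorem Finj {x y a b : Q} (h : F x y a = F x y b) : a = b := by
  have := Fd x y a
  rw [h, ← Fd] at this
  exact cancel (cancel this)

theorem Fx (x y : Q) : F x y x = x := by
  rw [F, comm y x, comm x (x * y), ip]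

theorem Fy (x y : Q) : F x y y = y := by
  rw [F, comm x (y * y), ← alt, comm y (y * x), comm y x, ip]

theorem Fxy (x y : Q) : F x y (x * y) = x * y := by rw [Fm, Fx, Fy]

/-- alpha q = p -/
theorem Fqp (x y z : Q) : F x y ((x * y) * z) = x * (y * z) := by
  rw [Fm, Fxy, ← Fd]

theorem F1 (x y : Q) : F x y 1 = 1 := by
  rw [F, one_r, inv_m]

theorem Finv (x y z : Q) : F x y z⁻¹ = (F x y z)⁻¹ := by
  apply cancel (x := F x y z)
  rw [← Fm, comm z, inv_m, F1, comm, inv_m]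

theorem Fii (x y z : Q) : F x⁻¹ y⁻¹ z = F x y z := by
  have h : F x⁻¹ y⁻¹ z = (F x y z⁻¹)⁻¹ := by
    simp only [F, mul_inv', inv_inv']
  rw [h, Finv, inv_inv']

theorem F' (x y z : Q) : F x y z = (x * y) * (x⁻¹ * (y⁻¹ * z)) := by
  rw [← Fii, F, mul_inv', inv_inv', inv_inv']

theorem Fsw (x y z : Q) : F x y (F y x z) = z := by
  have h : F y x z = y * (x * ((y * x)⁻¹ * z)) := by
    rw [← Fqp, ip']
  rw [h, F', ip, ip, comm y x, ip']

/-- alpha r = q -/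
theorem Frq (x y z : Q) : F x y (y * (x * z)) = (x * y) * z := by
  rw [← Fqp y x z, Fsw, comm y x]

/-- beta q = p, beta = F y z -/
theorem Gqp (x y z : Q) : F y z ((x * y) * z) = x * (y * z) := by
  have := Frq y z x
  rwa [comm z, comm y x, comm (y * z)] at this

/-- beta p = r -/
theorem Gpr (x y z : Q) : F y z (x * (y * z)) = y * (x * z) := by
  have := Fqp y z x
  rwa [comm (y * z), comm z x] at this

/-- gamma p = r, gamma = F z x -/
theorem Hpr (x y z : Q) : F z x (x * (y * z)) = y * (x * z) := by
  have := Frq z x y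
  rwa [comm z y, comm z x, comm (x * z)] at this

/-- gamma r = q -/
theorem Hrq (x y z : Q) : F z x (y * (x * z)) = (x * y) * z := by
  have := Fqp z x y
  rwa [comm (z * x), comm z x, comm z (x * y)] at this

theorem Msq (x y v : Q) : x * ((y * y) * (x * v)) = ((x * x) * (y * y)) * v := by
  have h := F' x y (y * (x * v))
  rw [ip, ip, F] at h
  have h2 := congrArg (fun w => (x * y) * w) h
  simp only [ip'] at h2
  rw [← alt, h2, alt, sqm]

theorem xyx (x y z : Q) : x * (y * (x * z)) = ((x * y) * x) * F (x * y) x (F x y z) := by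
  rw [Fd x y, Fm, Fx, Fd (x * y) x]

theorem usq (x y z : Q) : (x * (y * (x * z))) * (x * (y * (x * z))) =
    (((x * y) * x) * z) * (((x * y) * x) * z) := by
  rw [sqm x (y * (x * z)), sqm y (x * z), sqm x z, sqm (x * y * x) z, sqm (x * y) x, sqm x y,
    Msq, comm ((x * x) * (y * y)) (x * x), alt (x * x)]

/-- z square -/
theorem Mz (x y z : Q) : x * (y * (x * (z * z))) = ((x * y) * x) * (z * z) := by
  have h := usq x y z
  rw [xyx x y z, sqm, sqm _ z] at h
  have h2 := cancel h
  rw [xyx, Fm, Fm, h2]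

/-- from the form x(y(xz)) to (xp)(xq) -/
theorem conv1 (x p q : Q) (h : x * ((p * q) * (x * (x⁻¹ * q⁻¹))) = ((x * (p * q)) * x) * (x⁻¹ * q⁻¹)) :
    (x * p) * (x * q) = (x * x) * (p * q) := by
  have h1 : (p * q) * q⁻¹ = p := by rw [comm, comm p, ip]
  rw [ip', h1, comm _ x, alt, ← mul_inv', comm _ (x * q)⁻¹] at h
  rw [comm, h, ip']

theorem Mz2 (x y z : Q) : (x * y) * (x * (z * z)) = (x * x) * (y * (z * z)) := by
  apply conv1
  have h := Mz x (y * (z * z)) z⁻¹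
  rw [xyx] at h
  have h2 := cancel h
  rw [xyx, Fm, Fm, Finv, Finv, Fx, Fy, mul_inv' z z, h2]

theorem Fsq2 (x y z : Q) : F x y (F x y z) = F x (x * y) (F x (x * y) z) := by
  have key : ∀ w, F (x * y) x (F x y w) = F x (x * y) (F y x w) := by
    intro w
    have h := xyx x y w
    rw [Fd y x, comm y x, Fd x (x * y), comm x (x * y)] at h
    exact (cancel h).symm
  have h := key (F x y z)
  rw [Fsw] at h
  have h2 := congrArg (F x (x * y)) h
  rwa [Fsw] at h2

/-- outer square -/
theorem Mx (z x y : Q) : ((z * z) * x) * ((z * z) * y) = ((z * z) * (z * z)) * (x * y) := by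
  have hm := Mz2 x y z
  generalize z * z = s at hm ⊢
  rw [← alt] at hm
  -- F x s (F x s (x p)) = x r
  have h1 : F x (x * s) (F x (x * s) ((x * y) * (x * s))) = x * (y * (x * s)) := by
    rw [← Hrq x y (x * s), Fsw, ← Hpr x y (x * s), Fsw]
  rw [← Fsq2, hm, Fm, Fm, Fx, Fx] at h1
  have h2 := cancel h1
  -- gamma q = p
  have h3 : F s x ((x * y) * s) = x * (y * s) := by
    rw [← Hrq x y s, ← h2, Fsw, Fsw]
  have h4 : F s x ((s * x) * (s * y)) = F s x (s * ((x * y) * s)) := by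
    rw [Fqp, Fm, h3, Fx, comm s y]
  rw [Finj h4, comm (x * y), alt]

theorem conv2 (x y z : Q) (h : (x * (y * z)) * (x * z⁻¹) = (x * x) * ((y * z) * z⁻¹)) :
    x * (y * z) = ((x * x) * y) * (x⁻¹ * z) := by
  have h1 : (y * z) * z⁻¹ = y := by rw [comm, comm y, ip]
  rw [h1] at h
  rw [← h]
  have : (x⁻¹ * z) = (x * z⁻¹)⁻¹ := by rw [mul_inv', inv_inv']
  rw [this, comm (x * (y * z)) (x * z⁻¹), comm _ (x * z⁻¹)⁻¹, ip]

/-- sixth powers are nuclear -/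
theorem nuc6 (w y z : Q) : (((w * w) * ((w * w) * (w * w))) * y) * z =
    ((w * w) * ((w * w) * (w * w))) * (y * z) := by
  have hM := Mx w
  generalize w * w = s at hM ⊢
  have a1 : ∀ y z : Q, s * (y * z) = ((s * s) * y) * (s⁻¹ * z) :=
    fun y z => conv2 s y z (hM _ _)
  have a2 : ∀ y z : Q, ((s * s) * y) * (s⁻¹ * z) = (s⁻¹ * y) * ((s * s) * z) := by
    intro y z
    rw [← a1, comm y z, a1, comm]
  have a3 : ∀ y z : Q, ((s * s) * (s * y)) * z = y * ((s * s) * (s * z)) := by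
    intro y z
    have := a2 (s * y) (s * z)
    rwa [ip, ip] at this
  have a4 : ∀ y : Q, (s * s) * (s * y) = (s * (s * s)) * y := by
    intro y
    have h := a3 1 y
    rw [one_r, one_l] at h
    rw [← h, comm (s * s) s]
  simp only [a4] at a3
  generalize s * (s * s) = n at a3 ⊢
  have b : ∀ z, F y n z = z := by
    intro z
    rw [F, ← a3, comm y n, ip]
  have c := Fsw n y z
  rw [b] at c
  rw [Fd, c]

/-- main case: squares nuclear -/
theorem sqnuc (hn : ∀ x y z : Q, ((x * x) * y) * z = (x * x) * (y * z)) (x y z : Q) :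
    x * (y * z) = y * (x * z) := by
  have f1 : ∀ x y z : Q, F x (x * y) (F x y z) = z := by
    intro x y z
    have h : x * (x * (y * z)) = (x * (x * y)) * F x (x * y) (F x y z) := by
      rw [Fd x y, Fd x (x * y)]
    rw [alt, alt, ← hn] at h
    exact (cancel h).symm
  have f2 : ∀ x y z : Q, F x (x * y) z = F y x z := by
    intro x y z
    have := f1 x y (F y x z)
    rwa [Fsw] at this
  have f3 : ∀ x y z : Q, F (x * y) x z = F x y z := by
    intro x y z
    apply Finj (x := x) (y := x * y)
    rw [Fsw, f1]
  have f4 : ∀ x y z : Q, F x y (F x y z) = F y x (F y x z) := by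
    intro x y z
    rw [Fsq2, f2, f2]
  have f5 : ∀ x y z : Q, F x y (F x y (F x y (F x y z))) = z := by
    intro x y z
    rw [f4 x y z, Fsw, Fsw]
  -- squares are fixed and may be moved
  have fsq : ∀ x y w : Q, F x y (w * w) = w * w := by
    intro x y w
    rw [F, comm y (w * w), comm x (w * w * y), hn, comm y x, comm (w * w) (x * y), ip]
  -- xy * xz = x * s
  have g1 : ∀ x y z : Q, (x * y) * (x * z) = x * F x y (x * (y * z)) := by
    intro x y z
    apply Finj (x := x) (y := y)
    rw [Fqp, Fm, Fx, ← Fqp x y z, ← Frq x y z, f5]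
  have s1 : ∀ x y z : Q, F x y (x * (y * z)) = F z x ((x * y) * z) := by
    intro x y z
    have h1 : F x (x * z) (F x (x * z) ((x * y) * (x * z))) = x * (y * (x * z)) := by
      rw [← Hrq x y (x * z), Fsw, ← Hpr x y (x * z), Fsw]
    rw [← Fsq2, g1, Fm, Fm, Fx, Fx] at h1
    have h2 := cancel h1
    rw [← Hrq x y z, ← h2, Fsw, Fsw]
  have s2 : ∀ x y z : Q, F x y (x * (y * z)) = F y x (y * (x * z)) := by
    intro x y z
    rw [← Fqp x y z, ← Frq x y z, f4, Fsw]
  have s3 : ∀ x y z : Q, F x y (x * (y * z)) = F y z (y * (x * z)) := by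
    intro x y z
    rw [s2, s1, ← Gpr x y z, ← Gqp x y z, f4 y z, comm y x, Fsw]
  -- the key identity
  have key : ∀ x y z : Q, ((x * y)⁻¹ * F x y (x * (y * z))) * (x * (y * z)) =
      z * F x y (x * (y * z)) := by
    intro x y z
    have d1 : F x (y * z) (F x (y * z) (F x (y * z) (z * (x * (y * z))))) =
        z * F x y (x * (y * z)) := by
      rw [comm z (x * (y * z)), ← Frq x (y * z) z, f5, s3 x y z, comm x z, s2 y z x,
        comm y z, g1]
    have d2 : F x (y * z) (F x (y * z) (F x (y * z) z)) = F x y (F x y z) := by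
      have hR : y * (x * (x * (y * z))) = ((x * y) * (x * y)) * z := by
        rw [alt x, comm y, hn, comm (y * z) y, alt, ← hn, comm (x * x) (y * y), ← sqm, comm y x]
      have hP : x * (y * (x * (y * z))) = ((x * y) * (x * y)) * F x y (F x y z) := by
        rw [← Fqp, ← Frq, hR, Fm, Fm, fsq, fsq]
      have h := Hpr x y (x * (y * z))
      rw [hP, hR, Fm, fsq, f3] at h
      have h2 := cancel h
      have h3 := f5 x (y * z) (F x y (F x y z))
      rwa [h2] at h3
    rw [Fm, Fm, Fm, Fxy, Fxy, Fxy, d2] at d1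
    rw [← d1]
    congr 1
    conv_rhs => rw [F.eq_1 x y z]
    rw [Fm x y (x * y)⁻¹ (x * (y * z)), Finv, Fxy]
  have k1 := key x y z
  have k2 := key y x z
  rw [← s2, comm y x, ← k1] at k2
  exact (cancel k2).symm

/-- cubes -/
def Cub (Q : Type*) [ADL Q] : Type _ := {a : Q // ∃ b : Q, a = b * (b * b)}

theorem cub_ext {a b : Cub Q} (h : a.1 = b.1) : a = b := Subtype.ext h

instance : ADL (Cub Q) where
  mul a b := ⟨a.1 * b.1, by
    obtain ⟨a, c, rfl⟩ := a
    obtain ⟨b, d, rfl⟩ := b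
    exact ⟨c * d, (cbm c d).symm⟩⟩
  one := ⟨1, 1, by rw [one_l, one_l]⟩
  inv a := ⟨a.1⁻¹, by
    obtain ⟨a, c, rfl⟩ := a
    exact ⟨c⁻¹, by rw [mul_inv', mul_inv']⟩⟩
  comm a b := cub_ext (comm a.1 b.1)
  one_l a := cub_ext (one_l a.1)
  ip a b := cub_ext (ip a.1 b.1)
  ip' a b := cub_ext (ip' a.1 b.1)
  alt a b := cub_ext (alt a.1 b.1)
  sqm a b := cub_ext (sqm a.1 b.1)
  cbm a b := cub_ext (cbm a.1 b.1)
  auto x y a b := cub_ext (auto x.1 y.1 a.1 b.1)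

theorem cubassoc (a b c : Cub Q) : a * (b * c) = b * (a * c) := by
  apply sqnuc
  intro x y z
  apply cub_ext
  obtain ⟨x, w, rfl⟩ := x
  change (((w * (w * w)) * (w * (w * w))) * y.1) * z.1 =
    ((w * (w * w)) * (w * (w * w))) * (y.1 * z.1)
  rw [sqm, sqm, nuc6]

theorem moufang (x y z : Q) : x * (y * (x * z)) = ((x * y) * x) * z := by
  have h2 := usq x y z
  have h3 : (x * (y * (x * z))) * ((x * (y * (x * z))) * (x * (y * (x * z)))) =
    (((x * y) * x) * z) * ((((x * y) * x) * z) * (((x * y) * x) * z)) := by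
    simp only [cbm]
    have A := fun a b c : Cub Q => congrArg Subtype.val (cubassoc a b c)
    have A' : ∀ a b c : Q, (a * (a * a)) * ((b * (b * b)) * (c * (c * c))) =
      (b * (b * b)) * ((a * (a * a)) * (c * (c * c))) :=
      fun a b c => A ⟨_, a, rfl⟩ ⟨_, b, rfl⟩ ⟨_, c, rfl⟩
    have B : ∀ a b c : Q, (a * (a * a)) * ((b * (b * b)) * (c * (c * c))) =
      ((a * (a * a)) * (b * (b * b))) * (c * (c * c)) := by
      intro a b c
      rw [comm (b * (b * b)), A', comm]
    have C := B (x * y) x z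
    simp only [cbm] at C
    rw [← C, ← cbm x z, ← B, cbm]
  rw [h2] at h3
  exact cancel_r h3

end ADL

/-- Osborn: every commutative diassociative A-loop is Moufang. -/
theorem commutative_diassociative_Aloop_is_moufang (Q : Type*) (mul ld rd : Q → Q → Q) (e : Q)
    (hQ1 : ∀ x y, ld x (mul x y) = y) (hQ2 : ∀ x y, mul x (ld x y) = y)
    (hQ3 : ∀ x y, rd (mul x y) y = x) (hQ4 : ∀ x y, mul (rd x y) y = x)
    (hL : ∀ x, mul e x = x) (hR : ∀ x, mul x e = x)
    (hcomm : ∀ x y, mul x y = mul y x)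
    -- A-loop: every inner mapping (element of Mlt(Q) fixing e) is an automorphism
    (hA : ∀ φ ∈ Subgroup.closure
        (Set.range (leftTr mul ld hQ1 hQ2) ∪ Set.range (rightTr mul rd hQ3 hQ4)),
      φ e = e → ∀ a b : Q, φ (mul a b) = mul (φ a) (φ b))
    -- diassociativity: every 2-generated subloop is associative (hence a group)
    (hD : ∀ a b : Q, ∀ x ∈ genSubloop mul ld rd e a b, ∀ y ∈ genSubloop mul ld rd e a b,
      ∀ z ∈ genSubloop mul ld rd e a b, mul x (mul y z) = mul (mul x y) z) :
    ∀ x y z, mul x (mul y (mul x z)) = mul (mul (mul x y) x) z := by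
  have ga : ∀ a b, a ∈ genSubloop mul ld rd e a b := fun a b T hT => hT.1
  have gb : ∀ a b, b ∈ genSubloop mul ld rd e a b := fun a b T hT => hT.2.1
  have ge : ∀ a b, e ∈ genSubloop mul ld rd e a b := fun a b T hT => hT.2.2.1
  have gm : ∀ a b x y, x ∈ genSubloop mul ld rd e a b → y ∈ genSubloop mul ld rd e a b →
      mul x y ∈ genSubloop mul ld rd e a b :=
    fun a b x y hx hy T hT => hT.2.2.2.1 x (hx T hT) y (hy T hT)
  have gl : ∀ a b x y, x ∈ genSubloop mul ld rd e a b → y ∈ genSubloop mul ld rd e a b →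
      ld x y ∈ genSubloop mul ld rd e a b :=
    fun a b x y hx hy T hT => hT.2.2.2.2.1 x (hx T hT) y (hy T hT)
  have ip2 : ∀ x y, mul x (mul (ld x e) y) = y := by
    intro x y
    rw [hD x y x (ga x y) _ (gl _ _ _ _ (ga x y) (ge x y)) y (gb x y), hQ2, hL]
  have ip1 : ∀ x y, mul (ld x e) (mul x y) = y := by
    intro x y
    rw [hD x y _ (gl _ _ _ _ (ga x y) (ge x y)) x (ga x y) y (gb x y), hcomm _ x, hQ2, hL]
  have hld : ∀ x y, ld x y = mul (ld x e) y := by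
    intro x y
    conv_rhs => rw [← hQ2 x y]
    rw [ip1]
  have alt : ∀ x y, mul x (mul x y) = mul (mul x x) y := fun x y =>
    hD x y x (ga x y) x (ga x y) y (gb x y)
  have sqm : ∀ x y, mul (mul x y) (mul x y) = mul (mul x x) (mul y y) := by
    intro x y
    have hx := ga x y
    have hy := gb x y
    rw [← hD x y x hx y hy _ (gm _ _ _ _ hx hy), hcomm x y, hD x y y hy y hy x hx,
      hcomm _ x, hD x y x hx x hx _ (gm _ _ _ _ hy hy)]
  have cbm : ∀ x y, mul (mul x y) (mul (mul x y) (mul x y)) =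
      mul (mul x (mul x x)) (mul y (mul y y)) := by
    intro x y
    have hx := ga x y
    have hy := gb x y
    have hxx := gm _ _ _ _ hx hx
    have hyy := gm _ _ _ _ hy hy
    have hyyy := gm _ _ _ _ hy hyy
    rw [sqm, ← hD x y x hx y hy _ (gm _ _ _ _ hxx hyy), hcomm (mul x x),
      hD x y y hy _ hyy _ hxx, hcomm _ (mul x x), hD x y x hx _ hxx _ hyyy]
  let inst : ADL Q :=
    { mul := mul, one := e, inv := fun x => ld x e
      comm := hcomm, one_l := hL, ip := ip1, ip' := ip2, alt := alt, sqm := sqm, cbm := cbm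
      auto := by
        intro x y a b
        have hl : ∀ u, leftTr mul ld hQ1 hQ2 u ∈ Subgroup.closure
            (Set.range (leftTr mul ld hQ1 hQ2) ∪ Set.range (rightTr mul rd hQ3 hQ4)) :=
          fun u => Subgroup.subset_closure (Or.inl ⟨u, rfl⟩)
        have h := hA ((leftTr mul ld hQ1 hQ2 (mul x y))⁻¹ * (leftTr mul ld hQ1 hQ2 x *
          leftTr mul ld hQ1 hQ2 y))
          (mul_mem (inv_mem (hl _)) (mul_mem (hl _) (hl _)))
        have hv : ∀ z, ((leftTr mul ld hQ1 hQ2 (mul x y))⁻¹ * (leftTr mul ld hQ1 hQ2 x *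
          leftTr mul ld hQ1 hQ2 y)) z = mul (ld (mul x y) e) (mul x (mul y z)) := by
          intro z
          rw [← hld]
          rfl
        simp only [hv] at h
        refine h ?_ a b
        rw [hR, ← hld]
        have := hQ1 (mul x y) e
        rwa [hR] at this }
  exact fun x y z => inst.moufang x y z
end

section
/- If $Q$ is a power-associative conjugacy closed loop, then $Q/N(Q)$ is an abelian group of exponent dividing 12, where $N(Q)$ is the nucleus of $Q$. -/
/-- The nucleus of a loop: elements associating with all pairs of elements. -/
def nucleus {Q : Type*} (mul : Q → Q → Q) : Set Q :=
  {a | ∀ x y : Q, mul a (mul x y) = mul (mul a x) y ∧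
       mul x (mul a y) = mul (mul x a) y ∧
       mul x (mul y a) = mul (mul x y) a}

/-- The subloop generated by a single element `a`. -/
def genSubloop1 {Q : Type*} (mul ld rd : Q → Q → Q) (e a : Q) : Set Q :=
  ⋂₀ {T : Set Q | a ∈ T ∧ e ∈ T ∧
    (∀ x ∈ T, ∀ y ∈ T, mul x y ∈ T) ∧
    (∀ x ∈ T, ∀ y ∈ T, ld x y ∈ T) ∧
    (∀ x ∈ T, ∀ y ∈ T, rd x y ∈ T)}

/-- Left-bracketed powers: `x^0 = e`, `x^(n+1) = x * x^n`. -/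
def lpow {Q : Type*} (mul : Q → Q → Q) (e x : Q) : ℕ → Q
  | 0 => e
  | n + 1 => mul x (lpow mul e x n)

namespace PACC

/-- Conjugacy closed loops. -/
class CCLoop (Q : Type*) extends Mul Q, One Q, Div Q where
  ld : Q → Q → Q
  ld_mul : ∀ x y : Q, ld x (x * y) = y
  mul_ld : ∀ x y : Q, x * ld x y = y
  mul_rd : ∀ x y : Q, (x * y) / y = x
  rd_mul : ∀ x y : Q, (x / y) * y = x
  one_mul' : ∀ x : Q, 1 * x = x
  mul_one' : ∀ x : Q, x * 1 = x
  lcc : ∀ x z u : Q, x * (z * u) = ((x * z) / x) * (x * u)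
  rcc : ∀ x z u : Q, (u * z) * x = (u * x) * (ld x (z * x))

open CCLoop

section basic
variable {Q : Type*} [CCLoop Q]

attribute [simp] ld_mul mul_ld mul_rd rd_mul one_mul' mul_one'

theorem mul_left_inj' {x y z : Q} (h : x * y = x * z) : y = z := by
  rw [← ld_mul x y, h, ld_mul]

theorem mul_right_inj' {x y z : Q} (h : y * x = z * x) : y = z := by
  rw [← mul_rd y x, h, mul_rd]

def L (x : Q) : Equiv.Perm Q := ⟨fun y => x * y, fun y => ld x y, ld_mul x, mul_ld x⟩
def R (x : Q) : Equiv.Perm Q := ⟨fun y => y * x, fun y => y / x, fun y => mul_rd y x, fun y => rd_mul y x⟩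

@[simp] theorem L_app (x y : Q) : L x y = x * y := rfl
@[simp] theorem R_app (x y : Q) : R x y = y * x := rfl
@[simp] theorem L_inv (x y : Q) : (L x)⁻¹ y = ld x y := rfl
@[simp] theorem R_inv (x y : Q) : (R x)⁻¹ y = y / x := rfl

@[simp] theorem L_symm (x y : Q) : (L x).symm y = ld x y := rfl
@[simp] theorem R_symm (x y : Q) : (R x).symm y = y / x := rfl
@[simp] theorem div_self'' (x : Q) : x / x = 1 := by
  have := mul_rd 1 x
  rwa [one_mul'] at this
@[simp] theorem ld_self (x : Q) : ld x x = 1 := by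
  have := ld_mul x 1
  rwa [mul_one'] at this

def Atp (A B C : Equiv.Perm Q) : Prop := ∀ x y, A x * B y = C (x * y)

theorem Atp.mul {A B C A' B' C' : Equiv.Perm Q} (h : Atp A B C) (h' : Atp A' B' C') :
    Atp (A * A') (B * B') (C * C') := by
  intro x y
  simp only [Equiv.Perm.mul_apply]
  rw [h, h']

theorem Atp.inv {A B C : Equiv.Perm Q} (h : Atp A B C) : Atp A⁻¹ B⁻¹ C⁻¹ := by
  intro x y
  apply C.injective
  rw [← h]
  simp

theorem atpL (x : Q) : Atp ((R x)⁻¹ * L x) (L x) (L x) := by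
  intro z u
  simp only [Equiv.Perm.mul_apply, L_app, R_inv]
  exact (lcc x z u).symm

theorem atpR (x : Q) : Atp (R x) ((L x)⁻¹ * R x) (R x) := by
  intro u z
  simp only [Equiv.Perm.mul_apply, R_app, L_inv]
  exact (rcc x z u).symm

/-- nucleus -/
def Nuc (a : Q) : Prop := ∀ x y : Q, a * (x * y) = (a * x) * y ∧
       x * (a * y) = (x * a) * y ∧ x * (y * a) = (x * y) * a

theorem left_to_mid {a : Q} (h : ∀ x y : Q, a * (x * y) = (a * x) * y) :
    ∀ x y : Q, x * (a * y) = (x * a) * y := by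
  have h1 : Atp (L a) 1 (L a) := fun x y => (h x y).symm
  have h2 := (atpL a).mul h1.inv
  intro x y
  have h3 := h2 (x * a) y
  -- R⁻¹ L L⁻¹ = R⁻¹
  have h4 : ((x * a) / a) * (a * y) = (x * a) * y := by
    simpa using h3
  simpa using h4

theorem mid_to_right {a : Q} (h : ∀ x y : Q, x * (a * y) = (x * a) * y) :
    ∀ x y : Q, x * (y * a) = (x * y) * a := by
  have h1 : Atp (R a)⁻¹ (L a) 1 := by
    intro x y
    have := h (x / a) y
    simpa using this
  have h2 := h1.mul (atpR a)
  intro x y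
  have h3 := h2 x y
  simpa using h3

theorem right_to_mid {a : Q} (h : ∀ x y : Q, x * (y * a) = (x * y) * a) :
    ∀ x y : Q, x * (a * y) = (x * a) * y := by
  have h1 : Atp 1 (R a) (R a) := fun x y => h x y
  have h2 := (atpR a).mul h1.inv
  intro x y
  have h3 := h2 x (a * y)
  have h4 : (x * a) * y = x * (a * y) := by simpa using h3
  exact h4.symm

theorem mid_to_left {a : Q} (h : ∀ x y : Q, x * (a * y) = (x * a) * y) :
    ∀ x y : Q, a * (x * y) = (a * x) * y := by
  have h1 : Atp (R a)⁻¹ (L a) 1 := by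
    intro x y
    have := h (x / a) y
    simpa using this
  have h2 := h1.inv.mul (atpL a)
  intro x y
  have h3 := h2 x y
  have h4 : (a * x) * y = a * (x * y) := by simpa using h3
  exact h4.symm

theorem nuc_of_left {a : Q} (h : ∀ x y : Q, a * (x * y) = (a * x) * y) : Nuc a :=
  fun x y => ⟨h x y, left_to_mid h x y, mid_to_right (left_to_mid h) x y⟩

theorem nuc_of_right {a : Q} (h : ∀ x y : Q, x * (y * a) = (x * y) * a) : Nuc a :=
  fun x y => ⟨mid_to_left (right_to_mid h) x y, right_to_mid h x y, h x y⟩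

theorem Nuc.l {a : Q} (h : Nuc a) (x y : Q) : (a * x) * y = a * (x * y) := (h x y).1.symm
theorem Nuc.m {a : Q} (h : Nuc a) (x y : Q) : (x * a) * y = x * (a * y) := (h x y).2.1.symm
theorem Nuc.r {a : Q} (h : Nuc a) (x y : Q) : (x * y) * a = x * (y * a) := (h x y).2.2.symm

theorem nuc_of_atp_fst {B C : Equiv.Perm Q} (h : Atp 1 B C) : Nuc (B 1) ∧ ∀ u, B u = u * B 1 := by
  have hBC : ∀ y, B y = C y := fun y => by simpa using h 1 y
  have h2 : ∀ x, B x = x * B 1 := fun x => by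
    rw [hBC x]; simpa using (h x 1).symm
  refine ⟨nuc_of_right fun x y => ?_, h2⟩
  rw [← h2, ← h2, hBC (x * y)]
  simpa using h x y

theorem nuc_of_atp_snd {A C : Equiv.Perm Q} (h : Atp A 1 C) :
    Nuc (A 1) ∧ (∀ u, A u = A 1 * u) ∧ ∀ u, C u = A 1 * u := by
  have hBC : ∀ y, A y = C y := fun y => by simpa using h y 1
  have h2 : ∀ x, A x = A 1 * x := fun x => by
    rw [hBC x]; simpa using (h 1 x).symm
  refine ⟨nuc_of_left fun x y => ?_, h2, fun u => by rw [← hBC, h2]⟩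
  rw [← h2, ← h2, hBC (x * y)]
  simpa using (h x y).symm

theorem nuc_one : Nuc (1 : Q) := fun x y => by simp

theorem nuc_mul {a b : Q} (ha : Nuc a) (hb : Nuc b) : Nuc (a * b) := by
  apply nuc_of_left
  intro x y
  rw [ha.l b (x * y), ha.l b x, ha.l (b * x) y, hb.l]

theorem nuc_inv {a : Q} (ha : Nuc a) : ∃ b, Nuc b ∧ a * b = 1 ∧ b * a = 1 := by
  have h : a * ld a 1 = 1 := mul_ld _ _
  have h' : ld a 1 * a = 1 := by
    apply mul_left_inj' (x := a)
    rw [← ha.l, h]; simp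
  refine ⟨ld a 1, nuc_of_left fun x y => ?_, h, h'⟩
  apply mul_left_inj' (x := a)
  rw [← ha.l, ← ha.l, ← ha.l, h]; simp

/-- conjugation -/
theorem nuc_conj {a : Q} (ha : Nuc a) (x : Q) : Nuc (ld x (a * x)) := by
  have h1 : Atp 1 (R a) (R a) := fun x y => (ha.r x y).symm
  have h2 := ((atpR x).mul h1).mul (atpR x).inv
  have h3 : Atp 1 (((L x)⁻¹ * R x) * R a * ((L x)⁻¹ * R x)⁻¹) ((R x) * R a * (R x)⁻¹) := by
    simpa using h2
  have := (nuc_of_atp_fst h3).1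
  simpa using this

theorem nuc_conj' {a : Q} (ha : Nuc a) (x : Q) : Nuc ((x * a) / x) := by
  have h1 : Atp (L a) 1 (L a) := fun x y => (ha.l x y)
  have h2 := ((atpL x).mul h1).mul (atpL x).inv
  have h3 : Atp (((R x)⁻¹ * L x) * L a * ((R x)⁻¹ * L x)⁻¹) 1 ((L x) * L a * (L x)⁻¹) := by
    simpa using h2
  have := (nuc_of_atp_snd h3).1
  simpa using this

theorem key (x u : Q) : ∃ n, Nuc n ∧ ∃ w, u = n * w ∧ ((1 / x) * w) * x = u := by
  have h := ((atpR x).inv.mul (atpL u)).mul (atpR x)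
  have h' := ((atpL (1 / x)).inv.mul (atpL (u / x))).inv
  have h2 := h.mul h'
  have e : (((L x)⁻¹ * R x)⁻¹ * L u * ((L x)⁻¹ * R x)) * ((L (1 / x))⁻¹ * L (u / x))⁻¹ = 1 := by
    rw [mul_inv_eq_one]
    have key : ∀ u v : Q, (u / x) * v = (u * ld x (v * x)) / x := by
      intro u v
      apply mul_right_inj' (x := x)
      rw [rcc, rd_mul, rd_mul]
    ext v
    simp only [Equiv.Perm.mul_apply, L_app, R_app, L_inv, mul_inv_rev, inv_inv, R_inv]
    apply mul_left_inj' (x := 1 / x)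
    rw [mul_ld, key, key]
    simp [key]
  rw [e] at h2
  obtain ⟨hn, -, hC⟩ := nuc_of_atp_snd h2
  refine ⟨_, hn, ld (1/x) (u / x), ?_, ?_⟩
  · rw [← hC]
    simp
  · simp

end basic

section quot
variable (Q : Type*) [CCLoop Q]

theorem comm_nuc {Q : Type*} [CCLoop Q] {n : Q} (hn : Nuc n) (x : Q) :
    ∃ m, Nuc m ∧ n * x = x * m := ⟨_, nuc_conj hn x, by simp⟩

theorem comm_nuc' {Q : Type*} [CCLoop Q] {n : Q} (hn : Nuc n) (x : Q) :
    ∃ m, Nuc m ∧ x * n = m * x := ⟨_, nuc_conj' hn x, by simp⟩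

def nucSetoid : Setoid Q where
  r x y := ∃ n, Nuc n ∧ x = y * n
  iseqv := by
    refine ⟨fun x => ⟨1, nuc_one, by simp⟩, ?_, ?_⟩
    · rintro x y ⟨n, hn, rfl⟩
      obtain ⟨m, hm, h1, h2⟩ := nuc_inv hn
      exact ⟨m, hm, by rw [hn.m, h1]; simp⟩
    · rintro x y z ⟨n, hn, rfl⟩ ⟨m, hm, rfl⟩
      exact ⟨m * n, nuc_mul hm hn, by rw [hm.m]⟩

variable {Q}

theorem mul_compat {x x' y y' : Q} (hx : ∃ n, Nuc n ∧ x = x' * n) (hy : ∃ n, Nuc n ∧ y = y' * n) :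
    ∃ n, Nuc n ∧ x * y = (x' * y') * n := by
  obtain ⟨n, hn, rfl⟩ := hx
  obtain ⟨m, hm, rfl⟩ := hy
  obtain ⟨k, hk, h⟩ := comm_nuc hn y'
  refine ⟨k * m, nuc_mul hk hm, ?_⟩
  rw [hn.m, ← hn.l, h, hk.m, (nuc_mul hk hm).r]

theorem ld_compat {x x' y y' : Q} (hx : ∃ n, Nuc n ∧ x = x' * n) (hy : ∃ n, Nuc n ∧ y = y' * n) :
    ∃ n, Nuc n ∧ ld x y = (ld x' y') * n := by
  obtain ⟨n, hn, rfl⟩ := hx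
  obtain ⟨m, hm, rfl⟩ := hy
  obtain ⟨k, hk, h⟩ := comm_nuc hn (ld x' y')
  obtain ⟨j, hj, h1, h2⟩ := nuc_inv hk
  refine ⟨j * m, nuc_mul hj hm, ?_⟩
  apply mul_left_inj' (x := x' * n)
  rw [mul_ld, ← (nuc_mul hj hm).r, hn.m, h, ← hk.r, mul_ld, hk.m, ← hk.l, h1, one_mul']

theorem rd_compat {x x' y y' : Q} (hx : ∃ n, Nuc n ∧ x = x' * n) (hy : ∃ n, Nuc n ∧ y = y' * n) :
    ∃ n, Nuc n ∧ y / x = (y' / x') * n := by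
  obtain ⟨n, hn, rfl⟩ := hx
  obtain ⟨m, hm, rfl⟩ := hy
  obtain ⟨j, hj, h1, h2⟩ := nuc_inv hn
  obtain ⟨k, hk, h⟩ := comm_nuc' (nuc_mul hj hm) (x' * n)
  refine ⟨k, hk, ?_⟩
  apply mul_right_inj' (x := x' * n)
  rw [rd_mul, hk.m, ← h, ← (nuc_mul hj hm).r, ← hn.r, rd_mul, hn.m, ← hn.l, h1, one_mul']

instance quotLoop : CCLoop (Quotient (nucSetoid Q)) where
  mul := Quotient.map₂ (fun x y => x * y) (fun _ _ h _ _ h' => mul_compat h h')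
  one := Quotient.mk _ 1
  div := Quotient.map₂ (fun x y => x / y) (fun _ _ h _ _ h' => rd_compat h' h)
  ld := Quotient.map₂ (fun x y => ld x y) (fun _ _ h _ _ h' => ld_compat h h')
  ld_mul := by
    rintro ⟨x⟩ ⟨y⟩
    exact congrArg (Quotient.mk _) (ld_mul x y)
  mul_ld := by
    rintro ⟨x⟩ ⟨y⟩
    exact congrArg (Quotient.mk _) (mul_ld x y)
  mul_rd := by
    rintro ⟨x⟩ ⟨y⟩
    exact congrArg (Quotient.mk _) (mul_rd x y)
  rd_mul := by
    rintro ⟨x⟩ ⟨y⟩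
    exact congrArg (Quotient.mk _) (rd_mul x y)
  one_mul' := by
    rintro ⟨x⟩
    exact congrArg (Quotient.mk _) (one_mul' x)
  mul_one' := by
    rintro ⟨x⟩
    exact congrArg (Quotient.mk _) (mul_one' x)
  lcc := by
    rintro ⟨x⟩ ⟨y⟩ ⟨z⟩
    exact congrArg (Quotient.mk _) (lcc x y z)
  rcc := by
    rintro ⟨x⟩ ⟨y⟩ ⟨z⟩
    exact congrArg (Quotient.mk _) (rcc x y z)

theorem cip_quot (x u : Quotient (nucSetoid Q)) : ((1 / x) * u) * x = u := by
  obtain ⟨x⟩ := x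
  obtain ⟨u⟩ := u
  obtain ⟨n, hn, w, h1, h2⟩ := key x u
  obtain ⟨m, hm, h⟩ := comm_nuc hn w
  have e : Quotient.mk (nucSetoid Q) u = Quotient.mk _ w := Quotient.sound ⟨m, hm, by rw [h1, h]⟩
  have e2 := congrArg (Quotient.mk (nucSetoid Q)) h2
  change ((1 / Quotient.mk (nucSetoid Q) x) * Quotient.mk _ u) * Quotient.mk _ x = Quotient.mk _ u
  rw [e]
  exact e2.trans e

end quot

theorem cip_nuc {Q : Type*} [CCLoop Q] (cip : ∀ x u : Q, ((1 / x) * u) * x = u) (x : Q) :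
    Nuc x := by
  have e : (R x)⁻¹ * L x = L (1 / x) * L x := by
    ext u
    simp only [Equiv.Perm.mul_apply, L_app, R_inv]
    apply mul_right_inj' (x := x)
    rw [cip, rd_mul]
  have h := (atpL (1 / x)).mul (atpL x)
  have h2 : Atp ((R x)⁻¹ * L x) ((R x)⁻¹ * L x) ((R x)⁻¹ * L x) := by
    rw [e]
    intro u v
    have h3 := h u 1
    rw [← h u v]
    congr 1
    rw [← e] at h3 ⊢
    simpa using h3.symm
  have h4 := h2.inv.mul (atpL x)
  rw [inv_mul_cancel] at h4
  have := (nuc_of_atp_fst h4).1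
  simpa using this

theorem cip_comm {Q : Type*} [CCLoop Q] (cip : ∀ x u : Q, ((1 / x) * u) * x = u) (x y : Q) :
    x * y = y * x := by
  have h := cip x y
  rw [(cip_nuc cip x).r] at h
  apply mul_left_inj' (x := 1 / x)
  rw [h, ← (cip_nuc cip y).r, rd_mul, one_mul']

theorem comm_mod {Q : Type*} [CCLoop Q] (x y : Q) : ∃ n, Nuc n ∧ x * y = (y * x) * n :=
  Quotient.exact (cip_comm cip_quot (Quotient.mk (nucSetoid Q) x) (Quotient.mk (nucSetoid Q) y))

theorem assoc_mod {Q : Type*} [CCLoop Q] (x y z : Q) :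
    ∃ n, Nuc n ∧ x * (y * z) = ((x * y) * z) * n :=
  Quotient.exact ((cip_nuc cip_quot (Quotient.mk (nucSetoid Q) z)).r
    (Quotient.mk (nucSetoid Q) x) (Quotient.mk (nucSetoid Q) y)).symm

theorem assoc_mod' {Q : Type*} [CCLoop Q] (x y z : Q) :
    ∃ n, Nuc n ∧ (x * y) * z = (x * (y * z)) * n :=
  Quotient.exact ((cip_nuc cip_quot (Quotient.mk (nucSetoid Q) z)).r
    (Quotient.mk (nucSetoid Q) x) (Quotient.mk (nucSetoid Q) y))

section center
variable (Q : Type*) [CCLoop Q]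

/-- centre of the nucleus -/
abbrev ZN : Type _ := {a : Q // Nuc a ∧ ∀ m, Nuc m → a * m = m * a}

variable {Q}

noncomputable def ninv (a : Q) : Q := ld a 1

theorem ninv_spec {a : Q} (ha : Nuc a) : Nuc (ninv a) ∧ a * ninv a = 1 ∧ ninv a * a = 1 := by
  obtain ⟨b, hb, h1, h2⟩ := nuc_inv ha
  have : ninv a = b := by
    apply mul_left_inj' (x := a)
    rw [h1]; simp [ninv]
  rw [this]; exact ⟨hb, h1, h2⟩

instance : Add (ZN Q) := ⟨fun a b => ⟨a.1 * b.1, nuc_mul a.2.1 b.2.1, fun m hm => by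
    rw [hm.r, b.2.2 m hm, ← hm.m, a.2.2 m hm, hm.l]⟩⟩

instance : Zero (ZN Q) := ⟨⟨1, nuc_one, fun m _ => by simp⟩⟩

noncomputable instance : Neg (ZN Q) := ⟨fun a => ⟨ninv a.1, (ninv_spec a.2.1).1, fun m hm => by
    apply mul_left_inj' (x := a.1)
    rw [← a.2.1.l, ← a.2.1.l, (ninv_spec a.2.1).2.1, a.2.2 m hm, hm.l,
      (ninv_spec a.2.1).2.1]; simp⟩⟩

noncomputable instance : AddCommGroup (ZN Q) where
  add_assoc a b c := Subtype.ext (a.2.1.l _ _)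
  zero_add a := Subtype.ext (one_mul' _)
  add_zero a := Subtype.ext (mul_one' _)
  add_comm a b := Subtype.ext (a.2.2 _ b.2.1)
  neg_add_cancel a := Subtype.ext (ninv_spec a.2.1).2.2
  nsmul := nsmulRec
  zsmul := zsmulRec

theorem ZN.add_val (a b : ZN Q) : (a + b).1 = a.1 * b.1 := rfl
theorem ZN.zero_val : (0 : ZN Q).1 = 1 := rfl

theorem ld_conj_spec (x a : Q) : a * x = x * ld x (a * x) := by simp

noncomputable def T (x : Q) : ZN Q →+ ZN Q := AddMonoidHom.mk' (fun a => ⟨ld x (a.1 * x), nuc_conj a.2.1 x, by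
    intro m hm
    obtain ⟨k, hk, h⟩ := comm_nuc' hm x
    apply mul_left_inj' (x := x)
    have hn := nuc_conj a.2.1 x
    rw [← hn.m, mul_ld, hm.r, h, ← a.2.1.l, a.2.2 k hk, hk.l, ld_conj_spec x a.1, ← hk.l, ← h,
      hm.m, mul_ld]⟩) (by
    intro a b
    apply Subtype.ext
    apply mul_left_inj' (x := x)
    change x * ld x ((a.1 * b.1) * x) = x * (ld x (a.1 * x) * ld x (b.1 * x))
    rw [mul_ld, ← (nuc_conj b.2.1 x).r, mul_ld, (nuc_conj b.2.1 x).r, mul_ld, a.2.1.l])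

theorem T_spec (x : Q) (a : ZN Q) : a.1 * x = x * (T x a).1 := ld_conj_spec x a.1

theorem T_unique {x b : Q} {a : ZN Q} (h : a.1 * x = x * b) : (T x a).1 = b :=
  mul_left_inj' (x := x) (by rw [← h, T_spec])

theorem T_mul (x y : Q) (a : ZN Q) : T (x * y) a = T y (T x a) := by
  apply Subtype.ext
  apply T_unique
  rw [← a.2.1.l, T_spec, (T x a).2.1.m, T_spec, (T y (T x a)).2.1.r]

theorem T_nuc {n : Q} (hn : Nuc n) (a : ZN Q) : T n a = a := by
  apply Subtype.ext
  apply T_unique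
  exact a.2.2 n hn

theorem T_comm (x y : Q) (a : ZN Q) : T x (T y a) = T y (T x a) := by
  obtain ⟨n, hn, h⟩ := comm_mod x y
  rw [← T_mul, ← T_mul, h, T_mul (y * x) n, T_nuc hn]

/-- the inner map -/
def inn (y x : Q) : Equiv.Perm Q := (L (y * x))⁻¹ * (L y * L x)

theorem inn_app (y x z : Q) : inn y x z = ld (y * x) (y * (x * z)) := rfl

theorem inn_hom (y x z w : Q) : inn y x (z * w) = inn y x z * inn y x w := by
  have h := (atpL (y * x)).inv.mul ((atpL y).mul (atpL x))
  have h1 : inn y x 1 = 1 := by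
    apply mul_left_inj' (x := y * x)
    rw [inn_app]; simp
  have h2 := h z w
  have h3 := h z 1
  change _ * inn y x w = inn y x (z * w) at h2
  change _ * inn y x 1 = inn y x (z * 1) at h3
  rw [h1, mul_one', mul_one'] at h3
  rw [← h2, h3]

theorem inn_nuc (y x : Q) {n : Q} (hn : Nuc n) : inn y x n = n := by
  apply mul_left_inj' (x := y * x)
  rw [inn_app, mul_ld, hn.r, ]

def asr (y x z : Q) : Q := ld ((y * x) * z) (y * (x * z))

theorem asr_spec (y x z : Q) : y * (x * z) = ((y * x) * z) * asr y x z := by simp [asr]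

theorem asr_nuc (y x z : Q) : Nuc (asr y x z) := by
  obtain ⟨n, hn, h⟩ := assoc_mod y x z
  have : asr y x z = n := by
    rw [asr_spec] at h
    exact mul_left_inj' h
  rwa [this]

theorem inn_eq (y x z : Q) : inn y x z = z * asr y x z := by
  apply mul_left_inj' (x := y * x)
  rw [inn_app, mul_ld, asr_spec, (asr_nuc y x z).r]

theorem asr_central (y x z m : Q) (hm : Nuc m) : asr y x z * m = m * asr y x z := by
  obtain ⟨n, hn, h⟩ := comm_nuc' hm z
  have h1 := inn_hom y x z m
  rw [h, inn_hom, inn_nuc y x hn, inn_nuc y x hm, inn_eq, ← hn.l, ← h, hm.m, hm.r] at h1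
  exact (mul_left_inj' h1).symm

/-- associator -/
def al (y x z : Q) : ZN Q := ⟨asr y x z, asr_nuc y x z, asr_central y x z⟩

theorem al_spec (y x z : Q) : y * (x * z) = ((y * x) * z) * (al y x z).1 := asr_spec y x z

theorem al_unique {y x z : Q} {a : ZN Q} (h : y * (x * z) = ((y * x) * z) * a.1) : al y x z = a :=
  Subtype.ext (mul_left_inj' (by rw [← al_spec, h]))

theorem al_mul (y x z w : Q) : al y x (z * w) = T w (al y x z) + al y x w := by
  apply Subtype.ext
  rw [ZN.add_val]
  apply mul_left_inj' (x := z * w)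
  have h := inn_hom y x z w
  rw [inn_eq, inn_eq, inn_eq] at h
  change (z * w) * (al y x (z * w)).1 = (z * (al y x z).1) * (w * (al y x w).1) at h
  rw [h, ← (al y x w).2.1.r, (al y x z).2.1.m, T_spec, ← (T w (al y x z)).2.1.r,
    (T w (al y x z)).2.1.m]

theorem al_of_nuc (y x : Q) {n : Q} (hn : Nuc n) : al y x n = 0 := by
  apply al_unique
  rw [ZN.zero_val, mul_one', hn.r]

theorem al_mul_nuc (y x z : Q) {n : Q} (hn : Nuc n) : al y x (z * n) = al y x z := by
  rw [al_mul, al_of_nuc y x hn, T_nuc hn, add_zero]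

theorem ld_mod (x z : Q) : ∃ n, Nuc n ∧ ld x (z * x) = z * n := by
  obtain ⟨n, hn, h⟩ := comm_mod z x
  refine ⟨n, hn, ?_⟩
  rw [h, hn.r, ld_mul]

theorem al_swap (u z x : Q) : al u z x = al u x z := by
  obtain ⟨n, hn, h⟩ := ld_mod x z
  rw [← al_mul_nuc u x z hn, ← h]
  apply al_unique
  have h1 := al_spec u x (ld x (z * x))
  rw [mul_ld] at h1
  rw [h1, rcc x z u]

theorem al_swap' (y x u : Q) : al y x u = al x y u := by
  obtain ⟨n, hn, h⟩ := ld_mod x y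
  rw [al_swap x y u, ← al_mul_nuc x u y hn, ← h, al_swap x u]
  apply al_unique
  have h1 := al_spec x (ld x (y * x)) u
  rw [mul_ld] at h1
  rw [← h1, lcc x (ld x (y * x)) u, mul_ld, mul_rd]

theorem al_cyc (x y w z : Q) : T w (al x y z) - al x y z = T z (al x y w) - al x y w := by
  obtain ⟨n, hn, h⟩ := comm_mod w z
  have h1 := al_mul x y w z
  rw [h, al_mul_nuc x y _ hn, al_mul] at h1
  rw [sub_eq_sub_iff_add_eq_add, h1, add_comm]

end center

theorem six {Q M : Type*} [Mul Q] [AddCommGroup M] (T : Q → M →+ M) (al : Q → Q → Q → M)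
    (hT : ∀ x y m, T (x * y) m = T y (T x m))
    (hm : ∀ x y z w, al x y (z * w) = T w (al x y z) + al x y w)
    (s1 : ∀ x y z, al x y z = al x z y) (s2 : ∀ x y z, al x y z = al y x z)
    (hc : ∀ x y w z, T w (al x y z) - al x y z = T z (al x y w) - al x y w)
    (h0 : ∀ x, al x x x = 0) (x y : Q) : (6 : ℤ) • al x y y = 0 := by
  have fix : ∀ x y, T y (al x y y) = al x y y := by
    intro x y
    have := hc y y y x
    rw [h0, map_zero, sub_zero, s1 y y x, s2 y x y] at this
    exact sub_eq_zero.1 this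
  have m2 : ∀ x y z w, al x (z * w) y = T w (al x z y) + al x w y := by
    intro x y z w
    rw [s1, hm, s1 x y z, s1 x y w]
  have m1 : ∀ x y z w, al (z * w) x y = T w (al z x y) + al w x y := by
    intro x y z w
    rw [s2, m2, s2 x z, s2 x w]
  have E : ∀ x y, (3 : ℤ) • T y (T y (al x x y)) + (3 : ℤ) • al x y y = 0 := by
    intro x y
    have h := h0 (x * y)
    rw [m1, m2, m2, hm, hm, hm, hm, h0, h0, s1 x y x, s2 y x x, s1 x y x, s2 y x y,
      s1 y y x, s2 y x y] at h
    simp only [map_add, map_zero, fix] at h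
    rw [← h]
    module
  have e1 := E x y
  have e2 := E x (y * y)
  have e3 : al x (y * y) (y * y) = (4 : ℤ) • al x y y := by
    rw [m2, hm]
    simp only [map_add, fix]
    module
  have e4 := congrArg (T y) e1
  have e5 := congrArg (T y) (congrArg (T y) e4)
  rw [e3, hm, hT, hT] at e2
  simp only [map_add, map_zsmul, map_zero, fix] at e1 e4 e5
  simp only [hT, map_add, map_zsmul] at e2
  have e6 := congrArg (T y) e4
  simp only [map_add, map_zsmul, map_zero, fix] at e6
  linear_combination (norm := module) e2 - e5 - e6

theorem twelve {Q M : Type*} [Mul Q] [AddCommGroup M] (T : Q → M →+ M) (al : Q → Q → Q → M)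
    (hT : ∀ x y m, T (x * y) m = T y (T x m)) (hTc : ∀ x y m, T x (T y m) = T y (T x m))
    (hm : ∀ x y z w, al x y (z * w) = T w (al x y z) + al x y w)
    (s1 : ∀ x y z, al x y z = al x z y) (s2 : ∀ x y z, al x y z = al y x z)
    (hc : ∀ x y w z, T w (al x y z) - al x y z = T z (al x y w) - al x y w)
    (h0 : ∀ x, al x x x = 0) (p : ℕ → Q) (x : Q) (hp0 : ∀ y z, al y z (p 0) = 0)
    (hp : ∀ n, p (n + 1) = x * p n) (y z : Q) : al y z (p 12) = 0 := by
  have h6 := six T al hT hm s1 s2 hc h0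
  have m2 : ∀ x y z w, al x (z * w) y = T w (al x z y) + al x w y := by
    intro x y z w
    rw [s1, hm, s1 x y z, s1 x y w]
  have h12 : ∀ x y z, (12 : ℤ) • al x y z = 0 := by
    intro x y z
    have h := h6 x (y * z)
    have a1 := congrArg (T z) (congrArg (T z) (h6 x y))
    have a2 := h6 x z
    have a3 := congrArg (T y) (h6 x z)
    have a4 := hc x z z y
    rw [m2, hm, hm, s1 x z y] at h
    rw [s1 x z y] at a4
    simp only [map_add, map_zsmul, map_zero] at h a1 a2 a3
    linear_combination (norm := module) h - a1 + a2 - (12 : ℤ) • a4 - (2 : ℤ) • a3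
  have hb := hc y z x x
  set a := al y z x with ha
  set c := al y x x with hcdef
  have hTa : T x a - a = T z c - c := by
    have := hc y x x z
    rw [s1 y x z] at this
    exact this
  have hTc' : T x c = c := by
    have := hc x x x y
    rw [h0, map_zero, sub_zero, s1 x x y, s2 x y x] at this
    exact sub_eq_zero.1 this
  set b := T z c - c with hbdef
  have hTb : T x b = b := by
    rw [hbdef, map_sub, hTc x z, hTc']
  have hb6 : (6 : ℤ) • b = 0 := by
    have a1 := h6 y x
    have a2 := congrArg (T z) a1
    simp only [map_zsmul, map_zero] at a2
    rw [hbdef, smul_sub, a2, a1, sub_zero]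
  have step : ∀ n, al y z (p (n + 1)) = T x (al y z (p n)) + a := by
    intro n
    rw [hp, hm]
    have := hc y z x (p n)
    linear_combination (norm := module) - this
  have hTa' : T x a = a + b := by rw [← hTa]; abel
  have closed : ∀ n : ℕ, al y z (p n) = (n : ℤ) • a + ((n.choose 2 : ℕ) : ℤ) • b := by
    intro n
    induction n with
    | zero => simp [hp0]
    | succ n ih =>
      rw [step, ih, map_add, map_zsmul, map_zsmul, hTa', hTb, Nat.choose_succ_succ' n 1]
      simp only [Nat.choose_one_right]
      push_cast
      module
  rw [closed 12]
  have e1 := h12 y z x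
  have : (Nat.choose 12 2 : ℕ) = 66 := by decide
  rw [this]
  push_cast
  linear_combination (norm := module) e1 + (11 : ℤ) • hb6

end PACC

theorem pacc_loop_mod_nucleus_exponent_twelve (Q : Type*) (mul ld rd : Q → Q → Q) (e : Q)
    (hQ1 : ∀ x y, ld x (mul x y) = y) (hQ2 : ∀ x y, mul x (ld x y) = y)
    (hQ3 : ∀ x y, rd (mul x y) y = x) (hQ4 : ∀ x y, mul (rd x y) y = x)
    (hL : ∀ x, mul e x = x) (hR : ∀ x, mul x e = x)
    -- power-associativity: every 1-generated subloop is associative (a group)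
    (hPA : ∀ a : Q, ∀ x ∈ genSubloop1 mul ld rd e a, ∀ y ∈ genSubloop1 mul ld rd e a,
      ∀ z ∈ genSubloop1 mul ld rd e a, mul x (mul y z) = mul (mul x y) z)
    -- conjugacy closedness
    (hCCL : ∀ x y, ∃ z, ∀ u, ld x (mul y (mul x u)) = mul z u)
    (hCCR : ∀ x y, ∃ w, ∀ u, rd (mul (mul u x) y) x = mul u w) :
    (∀ x y, ∃ n ∈ nucleus mul, mul x y = mul (mul y x) n) ∧
    (∀ x y z, ∃ n ∈ nucleus mul, mul (mul x y) z = mul (mul x (mul y z)) n) ∧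
    (∀ x, lpow mul e x 12 ∈ nucleus mul) := by
  let inst : PACC.CCLoop Q :=
    { mul := mul
      one := e
      div := rd
      ld := ld
      ld_mul := hQ1
      mul_ld := hQ2
      mul_rd := hQ3
      rd_mul := hQ4
      one_mul' := hL
      mul_one' := hR
      lcc := by
        intro x z u
        change mul x (mul z u) = mul (rd (mul x z) x) (mul x u)
        obtain ⟨w, hw⟩ := hCCL x (rd (mul x z) x)
        have h1 := hw e
        rw [hR, hR, hQ4, hQ1] at h1
        rw [show mul z u = mul w u by rw [h1], ← hw, hQ2]
      rcc := by
        intro x z u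
        change mul (mul u z) x = mul (mul u x) (ld x (mul z x))
        obtain ⟨w, hw⟩ := hCCR x (ld x (mul z x))
        have h1 := hw e
        rw [hL, hL, hQ2, hQ3] at h1
        rw [show mul u z = mul u w by rw [h1], ← hw, hQ4] }
  refine ⟨PACC.comm_mod, PACC.assoc_mod', ?_⟩
  intro x
  have h0 : ∀ x : Q, PACC.al x x x = 0 := by
    intro x
    apply PACC.al_unique
    rw [PACC.ZN.zero_val, PACC.CCLoop.mul_one']
    have hx : x ∈ genSubloop1 mul ld rd e x := by
      rw [genSubloop1, Set.mem_sInter]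
      exact fun T hT => hT.1
    exact hPA x x hx x hx x hx
  have key := PACC.twelve (Q := Q) PACC.T PACC.al PACC.T_mul PACC.T_comm PACC.al_mul PACC.al_swap
    PACC.al_swap' PACC.al_cyc h0 (lpow mul e x) x
    (fun y z => PACC.al_of_nuc y z PACC.nuc_one) (fun n => rfl)
  have : PACC.Nuc (lpow mul e x 12) := by
    apply PACC.nuc_of_right
    intro y z
    rw [PACC.al_spec, key, PACC.ZN.zero_val, PACC.CCLoop.mul_one']
  exact this
end

section
/- Every Moufang loop is diassociative with respect to powers and products of two elements in the following weak sense: in a loop satisfying $x(y(xz))=((xy)x)z$, any two elements generate a subloop that is associative (a group). -/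
class MfL (Q : Type*) extends Mul Q, One Q, Inv Q where
  one_mul' : ∀ x : Q, 1 * x = x
  mul_one' : ∀ x : Q, x * 1 = x
  lip : ∀ x z : Q, x⁻¹ * (x * z) = z
  rip : ∀ x z : Q, (z * x) * x⁻¹ = z
  ii : ∀ x : Q, x⁻¹⁻¹ = x
  aaip : ∀ x y : Q, (x * y)⁻¹ = y⁻¹ * x⁻¹
  lm : ∀ x y z : Q, x * (y * (x * z)) = ((x * y) * x) * z
  mid : ∀ x p q : Q, (x * p) * (q * x) = (x * (p * q)) * x

namespace MfL
variable {Q : Type*} [MfL Q]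

theorem flex (x y : Q) : x * (y * x) = (x * y) * x := by
  have := lm x y 1
  simpa only [mul_one'] using this

theorem lip2 (x z : Q) : x * (x⁻¹ * z) = z := by
  have := lip x⁻¹ z
  rwa [ii] at this

theorem rip2 (x z : Q) : (z * x⁻¹) * x = z := by
  have := rip x⁻¹ z
  rwa [ii] at this

theorem inv_mul' (x : Q) : x⁻¹ * x = 1 := by
  have := lip x 1
  rwa [mul_one'] at this

theorem sand_inj (c y z : Q) (h : (c * y) * c = (c * z) * c) : y = z := by
  have h1 : c * y = c * z := by rw [← rip c (c * y), h, rip]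
  rw [← lip c y, h1, lip]

abbrev Lt := Bool × Bool

def neg (c : Lt) : Lt := (c.1, !c.2)

def ev (a b : Q) (c : Lt) : Q :=
  match c with
  | (true, true) => a
  | (true, false) => a⁻¹
  | (false, true) => b
  | (false, false) => b⁻¹

theorem ev_neg (a b : Q) (c : Lt) : ev a b (neg c) = (ev a b c)⁻¹ := by
  rcases c with ⟨_ | _, _ | _⟩ <;> simp [neg, ev, ii]

theorem neg_neg' (c : Lt) : neg (neg c) = c := by
  rcases c with ⟨_ | _, _ | _⟩ <;> rfl

/-- right-nested product of `k` letters of `x` starting at `i` -/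
def f (a b : Q) (x : ℕ → Lt) : ℕ → ℕ → Q
  | _, 0 => 1
  | i, k + 1 => ev a b (x i) * f a b x (i + 1) k

theorem f_one (a b : Q) (x : ℕ → Lt) (i : ℕ) : f a b x i 1 = ev a b (x i) := by
  simp [f, mul_one']

theorem f_congr (a b : Q) (x y : ℕ → Lt) (k : ℕ) : ∀ (i i' : ℕ),
    (∀ j < k, x (i + j) = y (i' + j)) → f a b x i k = f a b y i' k := by
  induction k with
  | zero => intros; rfl
  | succ k ih =>
    intro i i' h
    have h0 := h 0 (by omega)
    simp only [add_zero] at h0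
    simp only [f, h0]
    rw [ih (i + 1) (i' + 1)]
    intro j hj
    have := h (j + 1) (by omega)
    convert this using 2 <;> omega

def IH (a b : Q) (n : ℕ) : Prop := ∀ (y : ℕ → Lt) (i k l : ℕ), k + l < n →
  f a b y i k * f a b y (i + k) l = f a b y i (k + l)

def p (a b : Q) (x : ℕ → Lt) (n i k : ℕ) : Q := f a b x i k * f a b x (i + k) (n - k)

theorem p_one (a b : Q) (x : ℕ → Lt) (n i : ℕ) (hn : 1 ≤ n) :
    p a b x n i 1 = f a b x i n := by
  obtain ⟨n, rfl⟩ : ∃ t, n = t + 1 := ⟨n - 1, by omega⟩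
  simp [p, f, mul_one']

/-- appending a letter -/
theorem f_snoc (a b : Q) (n : ℕ) (ih : IH a b n) (x : ℕ → Lt) (i k : ℕ) (h : k + 1 < n) :
    f a b x i (k + 1) = f a b x i k * ev a b (x (i + k)) := by
  rw [← ih x i k 1 h, f_one]

theorem factA (a b : Q) (n : ℕ) (ih : IH a b n) (x : ℕ → Lt) (i d : ℕ) (hd : 1 ≤ d)
    (hdn : d + 1 < n) (hx : x i = x (i + d)) : p a b x n i (d + 1) = p a b x n i 1 := by
  rw [p_one _ _ _ _ _ (by omega)]
  obtain ⟨d, rfl⟩ : ∃ t, d = t + 1 := ⟨d - 1, by omega⟩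
  obtain ⟨l, rfl⟩ : ∃ l, n = (d + 1 + 1) + l := ⟨n - (d + 2), by omega⟩
  have e1 : d + 1 + 1 + l = (d + (l + 1)) + 1 := by omega
  have e2 : f a b x (i + 1) (d + 1) = f a b x (i + 1) d * ev a b (x i) := by
    rw [f_snoc a b _ ih x (i + 1) d (by omega), hx]
    congr 3; omega
  have e3 := ih x (i + 1) d (l + 1) (by omega)
  have e4 : f a b x (i + 1 + d) (l + 1) = ev a b (x i) * f a b x (i + (d + 1 + 1)) l := by
    have q1 : i + 1 + d = i + (d + 1) := by omega
    have q2 : i + (d + 1) + 1 = i + (d + 1 + 1) := by omega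
    rw [hx, q1, f, q2]
  rw [p, Nat.add_sub_cancel_left]
  conv_rhs => rw [e1]
  rw [f, e2, flex, ← lm, ← e4, e3, f]

theorem fact1 (a b : Q) (n : ℕ) (ih : IH a b n) (x : ℕ → Lt) (i k : ℕ) (hk : 1 ≤ k)
    (hkn : k < n) (hx : x i = x (i + (n - 1))) : p a b x n i k = p a b x n i 1 := by
  rw [p_one _ _ _ _ _ (by omega)]
  obtain ⟨k, rfl⟩ : ∃ t, k = t + 1 := ⟨k - 1, by omega⟩
  obtain ⟨l, rfl⟩ : ∃ l, n = (k + 1) + (l + 1) := ⟨n - (k + 2), by omega⟩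
  rw [p, Nat.add_sub_cancel_left, f_snoc a b _ ih x (i + (k + 1)) l (by omega)]
  have e0 : x (i + (k + 1) + l) = x i := by rw [hx]; congr 1; omega
  have e1 : k + 1 + (l + 1) = (k + l + 1) + 1 := by omega
  have e2 := ih x (i + 1) k l (by omega)
  have e3 := f_snoc a b _ ih x (i + 1) (k + l) (by omega)
  have e4 : x (i + 1 + (k + l)) = x i := by rw [hx]; congr 1; omega
  rw [e4] at e3
  have e5 : i + (k + 1) = i + 1 + k := by omega
  conv_rhs => rw [e1, f, e3, flex]
  rw [e0, f, mid, e5, e2]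

theorem rot1 (a b : Q) (n : ℕ) (ih : IH a b n) (x : ℕ → Lt) (hx : ∀ i, x (i + n) = neg (x i))
    (i k : ℕ) (hk : 1 ≤ k) (hkn : k + 1 < n) :
    p a b x n i (k + 1) = (ev a b (x i) * p a b x n (i + 1) k) * ev a b (x i) := by
  obtain ⟨l, rfl⟩ : ∃ l, n = (k + 1) + l := ⟨n - (k + 1), by omega⟩
  have e1 : k + 1 + l - k = l + 1 := by omega
  have e2 := f_snoc a b _ ih x (i + 1 + k) l (by omega)
  have e3 : x (i + 1 + k + l) = neg (x i) := by rw [← hx]; congr 1; omega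
  rw [e3, ev_neg] at e2
  rw [p, p, Nat.add_sub_cancel_left, e1, e2, ← mid, rip2, f]
  congr 2; omega

theorem rot2 (a b : Q) (n : ℕ) (x : ℕ → Lt) (hx : ∀ i, x (i + n) = neg (x i))
    (i : ℕ) (hn : 2 ≤ n) :
    p a b x n i 1 = (ev a b (x i) * p a b x n (i + 1) (n - 1)) * ev a b (x i) := by
  rw [p_one _ _ _ _ _ (by omega)]
  obtain ⟨n, rfl⟩ : ∃ t, n = t + 1 := ⟨n - 1, by omega⟩
  have e3 : x (i + 1 + n) = neg (x i) := by rw [← hx]; congr 1; omega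
  rw [p, Nat.add_sub_cancel, Nat.add_sub_cancel_left, f_one, e3, ev_neg, ← mid, inv_mul', mul_one', f]

/-- cyclically indexed version, modulus `n - 1` -/
def pp (a b : Q) (x : ℕ → Lt) (n i : ℕ) (j : ℤ) : Q :=
  p a b x n i (((j - i - 1) % ((n : ℤ) - 1)).toNat + 1)

theorem pp_rot (a b : Q) (n : ℕ) (ih : IH a b n) (x : ℕ → Lt) (hx : ∀ i, x (i + n) = neg (x i))
    (hn : 2 < n) (i : ℕ) (j : ℤ) :
    pp a b x n i j = (ev a b (x i) * pp a b x n (i + 1) j) * ev a b (x i) := by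
  have hm : (0 : ℤ) < (n : ℤ) - 1 := by omega
  have h0 := Int.emod_nonneg (j - i - 1) hm.ne'
  have h1 := Int.emod_lt_of_pos (j - i - 1) hm
  have e : (j - ((i + 1 : ℕ) : ℤ) - 1) % ((n : ℤ) - 1)
      = ((j - i - 1) % ((n : ℤ) - 1) - 1) % ((n : ℤ) - 1) := by
    rw [Int.emod_sub_emod]; congr 1; push_cast; ring
  unfold pp
  rw [e]
  generalize (j - i - 1) % ((n : ℤ) - 1) = t at h0 h1
  rcases h0.eq_or_lt with h | h
  · subst h
    have : ((0 : ℤ) - 1) % ((n : ℤ) - 1) = (n : ℤ) - 2 := by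
      rw [← Int.add_emod_right, Int.emod_eq_of_lt] <;> omega
    rw [this]
    have e5 : ((n : ℤ) - 2).toNat + 1 = n - 1 := by omega
    rw [e5]
    exact rot2 a b n x hx i (by omega)
  · rw [Int.emod_eq_of_lt (by omega) (by omega)]
    have e5 : (t - 1).toNat + 1 = t.toNat := by omega
    rw [e5]
    exact rot1 a b n ih x hx i _ (by omega) (by omega)

def S (a b : Q) (x : ℕ → Lt) (n : ℕ) (j l : ℤ) : Prop := pp a b x n 0 j = pp a b x n 0 l

theorem S_iff (a b : Q) (n : ℕ) (ih : IH a b n) (x : ℕ → Lt) (hx : ∀ i, x (i + n) = neg (x i))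
    (hn : 2 < n) (i : ℕ) (j l : ℤ) : S a b x n j l ↔ pp a b x n i j = pp a b x n i l := by
  induction i with
  | zero => rfl
  | succ i ihi =>
    rw [ihi, pp_rot a b n ih x hx hn i j, pp_rot a b n ih x hx hn i l]
    exact ⟨sand_inj _ _ _, fun h => by rw [h]⟩

theorem S_per (a b : Q) (n : ℕ) (x : ℕ → Lt) (j : ℤ) : S a b x n j (j + (n - 1)) := by
  unfold S pp
  congr 3
  rw [← Int.add_emod_right]; congr 1; ring

theorem S_shift (a b : Q) (n : ℕ) (ih : IH a b n) (x : ℕ → Lt) (hx : ∀ i, x (i + n) = neg (x i))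
    (hn : 2 < n) (j l : ℤ) : S a b x n (j + 2) (l + 2) ↔ S a b x n j l := by
  rw [S_iff a b n ih x hx hn (2 * n)]
  have key : ∀ j : ℤ, pp a b x n (2 * n) (j + 2) = pp a b x n 0 j := by
    intro j
    unfold pp p
    have e : (j + 2 - ((2 * n : ℕ) : ℤ) - 1) % ((n : ℤ) - 1)
        = (j - ((0 : ℕ) : ℤ) - 1) % ((n : ℤ) - 1) := by
      rw [Int.emod_emod_of_dvd _ (dvd_refl _) |>.symm, Int.emod_emod_of_dvd _ (dvd_refl _)]
      apply Int.emod_emod_of_dvd _ (dvd_refl _) |>.symm.trans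
      rw [Int.emod_emod_of_dvd _ (dvd_refl _)]
      apply Int.ModEq.symm
      apply (Int.modEq_iff_dvd).2
      exact ⟨-2, by push_cast; ring⟩
    rw [e]
    have h2 : ∀ i, x (2 * n + i) = x i := by
      intro i
      have : 2 * n + i = i + n + n := by omega
      rw [this, hx, hx, neg_neg']
    congr 1
    · apply f_congr; intro t _; rw [h2]; congr 1; omega
    · apply f_congr; intro t _; rw [add_assoc, h2]; congr 1; omega
  rw [key, key]; rfl

theorem S_A (a b : Q) (n : ℕ) (ih : IH a b n) (x : ℕ → Lt) (hx : ∀ i, x (i + n) = neg (x i))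
    (hn : 2 < n) (i d : ℕ) (hd : 1 ≤ d) (hdn : d + 1 < n) (h : x i = x (i + d)) :
    S a b x n ((i : ℤ) + 1) ((i : ℤ) + 1 + d) := by
  rw [S_iff a b n ih x hx hn i]
  have := factA a b n ih x i d hd hdn h
  unfold pp
  have e1 : ((i : ℤ) + 1 - i - 1) % ((n : ℤ) - 1) = 0 := by
    have : (i : ℤ) + 1 - i - 1 = 0 := by ring
    rw [this]; simp
  have e2 : ((i : ℤ) + 1 + d - i - 1) % ((n : ℤ) - 1) = d := by
    have : (i : ℤ) + 1 + d - i - 1 = d := by ring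
    rw [this, Int.emod_eq_of_lt] <;> omega
  rw [e1, e2]
  simpa using this.symm

def T (a b : Q) (x : ℕ → Lt) (n : ℕ) (d : ℤ) : Prop := ∀ j, S a b x n j (j + d)

theorem T_add (a b : Q) (x : ℕ → Lt) (n : ℕ) (d d' : ℤ) (h : T a b x n d) (h' : T a b x n d') :
    T a b x n (d + d') := fun j => by
  have := (h j).trans (h' (j + d))
  rwa [add_assoc] at this

theorem T_neg (a b : Q) (x : ℕ → Lt) (n : ℕ) (d : ℤ) (h : T a b x n d) :
    T a b x n (-d) := fun j => by
  have := (h (j + -d)).symm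
  rwa [neg_add_cancel_right] at this

theorem T_zero (a b : Q) (x : ℕ → Lt) (n : ℕ) : T a b x n 0 := fun j => by
  rw [add_zero]; rfl

def TG (a b : Q) (x : ℕ → Lt) (n : ℕ) : AddSubgroup ℤ where
  carrier := {d | T a b x n d}
  add_mem' := fun {d d'} h h' => T_add a b x n d d' h h'
  zero_mem' := T_zero a b x n
  neg_mem' := fun {d} h => T_neg a b x n d h

theorem S_shift' (a b : Q) (n : ℕ) (ih : IH a b n) (x : ℕ → Lt) (hx : ∀ i, x (i + n) = neg (x i))
    (hn : 2 < n) (t : ℤ) (d : ℤ) : ∀ (j : ℤ), S a b x n j (j + d) →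
      S a b x n (j + 2 * t) (j + 2 * t + d) := by
  induction t using Int.induction_on with
  | zero => intro j h; simpa using h
  | succ k hk =>
    intro j h
    have := (S_shift a b n ih x hx hn _ _).2 (hk j h)
    convert this using 1 <;> ring
  | pred k hk =>
    intro j h
    rw [← S_shift a b n ih x hx hn]
    have := hk j h
    convert this using 1 <;> ring

theorem T_A (a b : Q) (n : ℕ) (ih : IH a b n) (x : ℕ → Lt) (hx : ∀ i, x (i + n) = neg (x i))
    (hn : 2 < n) (i d : ℕ) (hd : 1 ≤ d) (hdn : d + 1 < n) (h : x i = x (i + d)) :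
    (d : ℤ) ∈ TG a b x n := by
  have h1 := S_A a b n ih x hx hn i d hd hdn h
  have h2 := S_A a b n ih x hx hn (i + n) d hd hdn (by
    rw [hx, h, ← hx]; congr 1; omega)
  have h3 : S a b x n ((i : ℤ) + 2) ((i : ℤ) + 2 + d) := by
    have q1 := S_per a b n x ((i : ℤ) + 2)
    have q2 := S_per a b n x ((i : ℤ) + 2 + d)
    refine q1.trans (Eq.trans ?_ q2.symm)
    have := h2
    unfold S at this
    push_cast at this
    convert this using 2 <;> ring
  intro j
  rcases Int.even_or_odd' (j - i) with ⟨t, ht | ht⟩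
  · have := S_shift' a b n ih x hx hn (t - 1) d _ h3
    convert this using 1 <;> linarith
  · have := S_shift' a b n ih x hx hn t d _ h1
    convert this using 1 <;> linarith

theorem all_of_T1 (a b : Q) (x : ℕ → Lt) (n : ℕ) (h : (1 : ℤ) ∈ TG a b x n) (j l : ℤ) :
    S a b x n j l := by
  have : (l - j) ∈ TG a b x n := by
    have := (TG a b x n).zsmul_mem h (l - j)
    simpa using this
  have := this j
  rwa [add_sub_cancel] at this

theorem all_S (a b : Q) (n : ℕ) (ih : IH a b n) (x : ℕ → Lt) (hx : ∀ i, x (i + n) = neg (x i))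
    (hn : 2 < n) (j l : ℤ) : S a b x n j l := by
  by_cases hA : ∃ i, x (i + 1) = neg (x i)
  · obtain ⟨i, hi⟩ := hA
    rw [S_iff a b n ih x hx hn (i + 1)]
    have key : ∀ j, pp a b x n (i + 1) j = p a b x n (i + 1) 1 := by
      intro j
      have hm : (0 : ℤ) < (n : ℤ) - 1 := by omega
      have h0 := Int.emod_nonneg (j - ((i + 1 : ℕ) : ℤ) - 1) hm.ne'
      have h1 := Int.emod_lt_of_pos (j - ((i + 1 : ℕ) : ℤ) - 1) hm
      apply fact1 a b n ih x (i + 1) _ (by omega) (by omega)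
      rw [hi, ← hx]; congr 1; omega
    rw [key, key]
  by_cases hB : ∃ i, x (i + 1) = x i
  · obtain ⟨i, hi⟩ := hB
    exact all_of_T1 a b x n (by
      simpa using T_A a b n ih x hx hn i 1 (by omega) (by omega) hi.symm) j l
  push Not at hA hB
  have alt : ∀ i, (x (i + 1)).1 = !(x i).1 := by
    intro i
    have h1 := hA i
    have h2 := hB i
    revert h1 h2
    generalize x (i + 1) = u
    generalize x i = v
    revert u v
    decide
  have alt2 : ∀ k i, (x (i + k)).1 = ((x i).1 ^^ (k % 2 == 1)) := by
    intro k
    induction k with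
    | zero => intro i; simp
    | succ k ihk =>
      intro i
      rw [← add_assoc, alt, ihk]
      rcases Nat.mod_two_eq_zero_or_one k with h | h <;>
        simp [h, Nat.add_mod]
  have hev : n % 2 = 0 := by
    have h1 := alt2 n 0
    rw [hx] at h1
    rcases Nat.mod_two_eq_zero_or_one n with h | h
    · exact h
    · simp [h, neg] at h1
  have hper : ((n : ℤ) - 1) ∈ TG a b x n := fun j => S_per a b n x j
  have h2 : ∀ i, x (i + 2) = x i ∨ x (i + 2) = neg (x i) := by
    intro i
    have h1 := alt2 2 i
    revert h1
    generalize x (i + 2) = u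
    generalize x i = v
    revert u v
    decide
  have four : (4 : ℤ) ∈ TG a b x n := by
    by_cases hC : ∃ i, x (i + 2) = x i
    · obtain ⟨i, hi⟩ := hC
      have := T_A a b n ih x hx hn i 2 (by omega) (by omega) hi.symm
      simpa using (TG a b x n).add_mem this this
    · push Not at hC
      have h3 : ∀ i, x (i + 2) = neg (x i) := fun i => (h2 i).resolve_left (hC i)
      have h4 : x 4 = x 0 := by
        have q1 := h3 0
        have q2 := h3 2
        simp only [Nat.zero_add] at q1
        rw [q1, neg_neg'] at q2
        exact q2
      have : n ≠ 4 := by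
        rintro rfl
        have := hx 0
        simp only [Nat.zero_add] at this
        rw [h4] at this
        revert this
        generalize x 0 = u
        revert u
        decide
      have := T_A a b n ih x hx hn 0 4 (by omega) (by omega) (by simpa using h4.symm)
      simpa using this
  apply all_of_T1
  have h44 := fun t : ℤ => (TG a b x n).zsmul_mem four t
  simp only [smul_eq_mul] at h44
  rcases (by omega : n % 4 = 0 ∨ n % 4 = 2) with h | h
  · have := (TG a b x n).sub_mem (h44 (n / 4)) hper
    convert this using 1
    omega
  · have := (TG a b x n).sub_mem hper (h44 (n / 4))
    convert this using 1
    omega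

theorem IH_all (a b : Q) (n : ℕ) : IH a b n := by
  induction n with
  | zero => intro y i k l h; omega
  | succ n ih =>
    intro y i k l hkl
    by_cases hlt : k + l < n
    · exact ih y i k l hlt
    have hn : n = k + l := by omega
    subst hn
    rcases Nat.eq_zero_or_pos l with rfl | hl
    · simp [f, mul_one']
    rcases Nat.lt_or_ge k 2 with hk | hk
    · interval_cases k
      · simp [f, one_mul']
      · rw [f_one, add_comm 1 l, f]
    -- main case
    let x : ℕ → Lt := fun j => neg^[j / (k + l)] (y (i + j % (k + l)))
    have hx : ∀ j, x (j + (k + l)) = neg (x j) := by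
      intro j
      simp only [x]
      rw [Nat.add_div_right _ (by omega), Nat.add_mod_right, Function.iterate_succ_apply']
    have hxy : ∀ j < k + l, x j = y (i + j) := by
      intro j hj
      simp only [x, Nat.div_eq_of_lt hj, Nat.mod_eq_of_lt hj, Function.iterate_zero, id]
    have key := all_S a b (k + l) ih x hx (by omega) k 1
    unfold S pp at key
    have e1 : (((k : ℤ) - (0 : ℕ) - 1) % (((k + l : ℕ) : ℤ) - 1)).toNat + 1 = k := by
      rw [Int.emod_eq_of_lt] <;> omega
    have e2 : (((1 : ℤ) - (0 : ℕ) - 1) % (((k + l : ℕ) : ℤ) - 1)).toNat + 1 = 1 := by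
      simp
    rw [e1, e2, p_one _ _ _ _ _ (by omega), p, Nat.add_sub_cancel_left] at key
    rw [f_congr a b y x k i 0, f_congr a b y x l (i + k) (0 + k),
      f_congr a b y x (k + l) i 0, key]
    · intro j hj; rw [hxy _ (by omega)]; congr 1; omega
    · intro j hj; rw [hxy _ (by omega)]; congr 1; omega
    · intro j hj; rw [hxy _ (by omega)]; congr 1; omega

theorem f_mul (a b : Q) (y : ℕ → Lt) (i k l : ℕ) :
    f a b y i k * f a b y (i + k) l = f a b y i (k + l) :=
  IH_all a b (k + l + 1) y i k l (by omega)

def G (a b : Q) : Set Q := {q | ∃ y k, q = f a b y 0 k}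

def cat (y : ℕ → Lt) (k : ℕ) (z : ℕ → Lt) : ℕ → Lt := fun j => if j < k then y j else z (j - k)

theorem cat1 (a b : Q) (y : ℕ → Lt) (k : ℕ) (z : ℕ → Lt) :
    f a b y 0 k = f a b (cat y k z) 0 k := by
  apply f_congr; intro j hj; simp [cat, hj]

theorem cat2 (a b : Q) (y : ℕ → Lt) (k : ℕ) (z : ℕ → Lt) (i l : ℕ) :
    f a b z i l = f a b (cat y k z) (k + i) l := by
  apply f_congr; intro j hj
  have : ¬ (k + i + j < k) := by omega
  simp only [cat, this, if_false]; congr 1; omega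

theorem G_mul (a b u v : Q) (hu : u ∈ G a b) (hv : v ∈ G a b) : u * v ∈ G a b := by
  obtain ⟨y, k, rfl⟩ := hu
  obtain ⟨z, l, rfl⟩ := hv
  refine ⟨cat y k z, k + l, ?_⟩
  rw [← f_mul, cat1 a b y k z, cat2 a b y k z 0 l, add_comm k 0]

theorem G_assoc (a b u v w : Q) (hu : u ∈ G a b) (hv : v ∈ G a b) (hw : w ∈ G a b) :
    u * (v * w) = (u * v) * w := by
  obtain ⟨y, k, rfl⟩ := hu
  obtain ⟨z, l, rfl⟩ := hv
  obtain ⟨t, m, rfl⟩ := hw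
  rw [cat1 a b z l t, cat2 a b z l t 0 m, cat1 a b y k (cat z l t),
    cat2 a b y k (cat z l t) 0 l, cat2 a b y k (cat z l t) (l + 0) m]
  generalize cat y k (cat z l t) = s
  have h1 := f_mul a b s k l m
  have h2 := f_mul a b s 0 k (l + m)
  have h3 := f_mul a b s 0 k l
  have h4 := f_mul a b s 0 (k + l) m
  simp only [Nat.zero_add] at h2 h3 h4
  simp only [Nat.add_zero]
  rw [h1, h2, h3, h4, Nat.add_assoc]

theorem G_ev (a b : Q) (c : Lt) : ev a b c ∈ G a b := ⟨fun _ => c, 1, by rw [f_one]⟩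

theorem inv_one' : (1 : Q)⁻¹ = 1 := by
  have := lip (1 : Q) 1
  rwa [one_mul', mul_one'] at this

theorem G_inv_aux (a b : Q) (y : ℕ → Lt) (k : ℕ) : ∀ i, (f a b y i k)⁻¹ ∈ G a b := by
  induction k with
  | zero => intro i; exact ⟨y, 0, by simp [f, inv_one']⟩
  | succ k ih =>
    intro i
    rw [f, aaip, ← ev_neg]
    exact G_mul _ _ _ _ (ih _) (G_ev _ _ _)

theorem G_inv (a b u : Q) (hu : u ∈ G a b) : u⁻¹ ∈ G a b := by
  obtain ⟨y, k, rfl⟩ := hu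
  exact G_inv_aux a b y k 0

end MfL

/-- every Moufang loop is diassociative: any two elements of a loop
satisfying `x(y(xz)) = ((xy)x)z` generate an associative subloop (a group). -/
theorem moufang_loop_diassociative (Q : Type*) (mul ld rd : Q → Q → Q) (e : Q)
    (hQ1 : ∀ x y, ld x (mul x y) = y) (hQ2 : ∀ x y, mul x (ld x y) = y)
    (hQ3 : ∀ x y, rd (mul x y) y = x) (hQ4 : ∀ x y, mul (rd x y) y = x)
    (hL : ∀ x, mul e x = x) (hR : ∀ x, mul x e = x)
    (hM : ∀ x y z, mul x (mul y (mul x z)) = mul (mul (mul x y) x) z) :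
    ∀ a b : Q, ∀ x ∈ genSubloop mul ld rd e a b, ∀ y ∈ genSubloop mul ld rd e a b,
      ∀ z ∈ genSubloop mul ld rd e a b, mul x (mul y z) = mul (mul x y) z := by
  have lc : ∀ x y z, mul x y = mul x z → y = z := fun x y z h => by
    rw [← hQ1 x y, h, hQ1]
  have lip : ∀ x z, mul (ld x e) (mul x z) = z := fun x z => by
    apply lc x
    rw [hM, hQ2, hL]
  have ix : ∀ x, mul (ld x e) x = e := fun x => by
    have := lip x e
    rwa [hR] at this
  have ii : ∀ x, ld (ld x e) e = x := fun x => by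
    apply lc (ld x e)
    rw [hQ2, ix]
  have rip : ∀ x u, mul (mul u x) (ld x e) = u := fun x u => by
    have := hM x (ld x u) (ld x e)
    rw [hQ2, hR, hQ2] at this
    exact this.symm
  have aaip : ∀ x y, ld (mul x y) e = mul (ld y e) (ld x e) := fun x y => by
    have h1 := lip (mul x y) (ld y e)
    rw [rip] at h1
    rw [← h1, rip]
  have mid : ∀ x p q, mul (mul x p) (mul q x) = mul (mul x (mul p q)) x := fun x p q => by
    have h1 := hM x (mul p q) (mul (ld x e) (ld q e))
    have h2 := lip (ld x e) (ld q e)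
    rw [ii] at h2
    rw [h2, rip] at h1
    have h3 := rip (mul (ld x e) (ld q e)) (mul (mul x (mul p q)) x)
    rw [← h1, aaip, ii, ii] at h3
    exact h3
  letI : MfL Q :=
    { mul := mul, one := e, inv := fun x => ld x e, one_mul' := hL, mul_one' := hR,
      lip := lip, rip := rip, ii := ii, aaip := aaip, lm := hM, mid := mid }
  intro a b
  have sub : genSubloop mul ld rd e a b ⊆ MfL.G a b := by
    apply Set.sInter_subset_of_mem
    refine ⟨MfL.G_ev a b (true, true), MfL.G_ev a b (false, true), ⟨fun _ => (true, true), 0, rfl⟩,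
      fun x hx y hy => MfL.G_mul a b x y hx hy, fun x hx y hy => ?_, fun x hx y hy => ?_⟩
    · have h : ld x y = mul (ld x e) y := by
        have := lip x (ld x y)
        rw [hQ2] at this
        exact this.symm
      rw [h]
      exact MfL.G_mul a b _ _ (MfL.G_inv a b x hx) hy
    · have h : rd x y = mul x (ld y e) := by
        have := rip y (rd x y)
        rw [hQ4] at this
        exact this.symm
      rw [h]
      exact MfL.G_mul a b _ _ hx (MfL.G_inv a b y hy)
  intro x hx y hy z hz
  exact MfL.G_assoc a b x y z (sub hx) (sub hy) (sub hz)
end
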